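/- arXiv:2508.05980 — 2 statements merged into one kernel-verified Lean document; each statement's English description precedes it below -/
import Mathlib

section
/- Let s ≥ 2 and 2 ≤ r' ≤ s' be integers with s' − r' < s − 1. Let F : U → ℂ^{r'×s'} be a local orthogonal map in chart form from 𝒢(1,s) to 𝒢(r',s'), i.e. U ⊆ ℂ^{1×s} is open, connected, and contains a null point, F is holomorphic, and F(z)·F(w)ᴴ = I_{r'} for all z, w ∈ U with z·wᴴ = 1. Then F is constant on U. -/
open scoped BigOperators
open Matrix

noncomputable section

/-- Hermitian dot product of row vectors: `z ⬝ wᴴ`. -/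
def cdot {n : ℕ} (z w : Fin n → ℂ) : ℂ := ∑ i, z i * (starRingEnd ℂ) (w i)

/-!
Rows of a local orthogonal map `Φ` at a null point `z` are orthonormal, and on the affine hyperplane
`⟨z, x⟩ = 1` through `z` the differences `Φ p x - Φ p z` lie in the orthogonal complement of these
rows, of dimension `s' - r'`, and send orthogonal vectors of `z^⊥`, of dimension `s - 1`, to
orthogonal vectors. A holomorphic map with this last property that is not identically zero is
nonzero at every member of some orthogonal family of full size, and the values there are linearly
independent. As `s' - r' < s - 1`, the map `Φ` is constant on that hyperplane near `z`. A point just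
outside the unit sphere lies on two distinct such hyperplanes, whose directions span the whole
space, so the derivative of `Φ` vanishes there, and the identity theorem gives constancy.
-/

open Filter Metric Module Topology

section IdentityTheorem

variable {E V : Type*} [NormedAddCommGroup E] [NormedSpace ℂ E]
  [NormedAddCommGroup V] [NormedSpace ℂ V] [CompleteSpace V] {f g : E → V} {U : Set E} {z : E}

theorem eqOn_of_convex_of_eventuallyEq (hU : IsOpen U) (hconv : Convex ℝ U)
    (hf : DifferentiableOn ℂ f U) (hg : DifferentiableOn ℂ g U) (hz : z ∈ U) (hfg : f =ᶠ[𝓝 z] g) :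
    Set.EqOn f g U := by
  intro x hx
  let line : ℂ → E := fun t => z + t • (x - z)
  have hline : Differentiable ℂ line := by fun_prop
  have h_line_zero : line 0 = z := by simp [line]
  have h_line_one : line 1 = x := by simp [line]
  have hD : IsOpen (line ⁻¹' U) := hU.preimage hline.continuous
  have hD_conv : Convex ℝ (line ⁻¹' U) :=
    (hconv.translate_preimage_right z).linear_preimage
      ((LinearMap.toSpanSingleton ℂ E (x - z)).restrictScalars ℝ)
  have hD_maps : Set.MapsTo line (line ⁻¹' U) U := Set.mapsTo_preimage line U
  have hfg_line : f ∘ line =ᶠ[𝓝 0] g ∘ line :=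
    (hline.continuous.tendsto' 0 z h_line_zero).eventually hfg
  have h_eqOn : Set.EqOn (f ∘ line) (g ∘ line) (line ⁻¹' U) :=
    ((hf.comp hline.differentiableOn hD_maps).analyticOnNhd hD).eqOn_of_preconnected_of_eventuallyEq
      ((hg.comp hline.differentiableOn hD_maps).analyticOnNhd hD) hD_conv.isPreconnected
      (by rwa [Set.mem_preimage, h_line_zero]) hfg_line
  simpa only [Function.comp_apply, h_line_one] using
    h_eqOn (x := 1) (by rwa [Set.mem_preimage, h_line_one])

theorem eqOn_of_isPreconnected_of_eventuallyEq (hU : IsOpen U) (hconn : IsPreconnected U)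
    (hf : DifferentiableOn ℂ f U) (hg : DifferentiableOn ℂ g U) (hz : z ∈ U) (hfg : f =ᶠ[𝓝 z] g) :
    Set.EqOn f g U := by
  suffices hsub : U ⊆ {y | f =ᶠ[𝓝 y] g} from fun x hx => (hsub hx).eq_of_nhds
  refine hconn.subset_of_closure_inter_subset isOpen_setOfPred_eventually_nhds ⟨z, hz, hfg⟩ ?_
  rintro y ⟨hy_closure, hyU⟩
  obtain ⟨r, hr, hrU⟩ := Metric.isOpen_iff.1 hU y hyU
  obtain ⟨b, hb, hyb⟩ := Metric.mem_closure_iff.1 hy_closure r hr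
  have h_eqOn : Set.EqOn f g (ball y r) :=
    eqOn_of_convex_of_eventuallyEq isOpen_ball (convex_ball y r) (hf.mono hrU) (hg.mono hrU)
      (mem_ball'.2 hyb) hb
  exact h_eqOn.eventuallyEq_of_mem (ball_mem_nhds y hr)

end IdentityTheorem

section Hermitian

variable {E : Type*} [NormedAddCommGroup E] [InnerProductSpace ℂ E]

theorem norm_sub_sq_of_inner_eq_one {y z : E} (hz : ‖z‖ = 1) (hzy : inner ℂ z y = 1) :
    ‖y - z‖ ^ 2 = ‖y‖ ^ 2 - 1 := by
  rw [norm_sub_sq (𝕜 := ℂ), inner_re_symm, hzy, hz, RCLike.one_re]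
  ring

theorem disjoint_span_singleton_of_inner_eq_one {y z₁ z₂ : E} (hne : z₁ ≠ z₂)
    (h₁ : inner ℂ z₁ y = 1) (h₂ : inner ℂ z₂ y = 1) : Disjoint (ℂ ∙ z₁) (ℂ ∙ z₂) := by
  refine Submodule.disjoint_span_singleton.2 fun h_mem => (hne ?_).elim
  obtain ⟨c, rfl⟩ := Submodule.mem_span_singleton.1 h_mem
  have hc : c = 1 := by
    rw [inner_smul_left, h₁, mul_one] at h₂
    rwa [← map_eq_one_iff _ (starRingEnd ℂ).injective]
  rw [hc, one_smul]

theorem norm_eq_one_and_inner_eq_one_of_orthogonal {y g : E} (hy : y ≠ 0) (hyg : inner ℂ y g = 0)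
    (hg : ‖g‖ ^ 2 = 1 - (‖y‖ ^ 2)⁻¹) :
    ‖((‖y‖ : ℂ) ^ 2)⁻¹ • y + g‖ = 1 ∧ inner ℂ (((‖y‖ : ℂ) ^ 2)⁻¹ • y + g) y = 1 := by
  have hy_norm : ‖y‖ ≠ 0 := norm_ne_zero_iff.2 hy
  constructor
  · have h_orth : inner ℂ (((‖y‖ : ℂ) ^ 2)⁻¹ • y) g = 0 := by rw [inner_smul_left, hyg, mul_zero]
    have h_foot : ‖((‖y‖ : ℂ) ^ 2)⁻¹ • y‖ ^ 2 = (‖y‖ ^ 2)⁻¹ := by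
      rw [norm_smul, norm_inv, norm_pow, Complex.norm_real, norm_norm]
      field_simp
    have h_sq : ‖((‖y‖ : ℂ) ^ 2)⁻¹ • y + g‖ ^ 2 = 1 := by
      rw [sq, norm_add_sq_eq_norm_sq_add_norm_sq_of_inner_eq_zero _ _ h_orth, ← sq, ← sq, h_foot,
        hg, add_sub_cancel]
    exact (pow_eq_one_iff_of_nonneg (norm_nonneg _) two_ne_zero).1 h_sq
  · have hy_coe : (‖y‖ : ℂ) ≠ 0 := Complex.ofReal_ne_zero.2 hy_norm
    simp [inner_self_eq_norm_sq_to_K, inner_eq_zero_symm.1 hyg, hy_coe]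

theorem mem_orthogonal_span_range {ι : Type*} {v : ι → E} {u : E} (h : ∀ i, inner ℂ (v i) u = 0) :
    u ∈ (Submodule.span ℂ (Set.range v))ᗮ := by
  have h_le : Submodule.span ℂ (Set.range v) ≤ (ℂ ∙ u)ᗮ :=
    Submodule.span_le.2 (Set.range_subset_iff.2 fun i =>
      Submodule.mem_orthogonal_singleton_iff_inner_left.2 (h i))
  exact (Submodule.mem_orthogonal _ u).2 fun w hw =>
    Submodule.mem_orthogonal_singleton_iff_inner_left.1 (h_le hw)

theorem frequently_nhds_one_lt_norm {z : E} (hz : ‖z‖ = 1) : ∃ᶠ y in 𝓝 z, 1 < ‖y‖ := by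
  have h_closure : z ∈ closure (closedBall (0 : E) 1)ᶜ := by
    simp [closure_compl, interior_closedBall (0 : E) one_ne_zero, hz]
  exact (mem_closure_iff_frequently.1 h_closure).mono fun y hy => by simpa using hy

variable [FiniteDimensional ℂ E]

theorem orthogonal_sup_orthogonal_eq_top {K₁ K₂ : Submodule ℂ E} (h : Disjoint K₁ K₂) :
    K₁ᗮ ⊔ K₂ᗮ = ⊤ := by
  rw [← Submodule.orthogonal_eq_bot_iff, ← Submodule.inf_orthogonal,
    Submodule.orthogonal_orthogonal, Submodule.orthogonal_orthogonal, h.eq_bot]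

theorem finrank_le_finrank_orthogonal_span_singleton_add_one (a : E) :
    finrank ℂ E ≤ finrank ℂ (ℂ ∙ a)ᗮ + 1 := by
  have h_sum := Submodule.finrank_add_finrank_orthogonal (ℂ ∙ a)
  have h_span : finrank ℂ (ℂ ∙ a) ≤ 1 := (finrank_span_le_card {a}).trans_eq (by simp)
  lia

theorem exists_inner_eq_zero_and_norm_eq (hdim : 1 < finrank ℂ E) (a : E) {r : ℝ} (hr : 0 ≤ r) :
    ∃ b : E, inner ℂ a b = 0 ∧ ‖b‖ = r := by
  have h_finrank := finrank_le_finrank_orthogonal_span_singleton_add_one a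
  have : Nontrivial (ℂ ∙ a)ᗮ := Module.nontrivial_of_finrank_pos (R := ℂ) (by lia)
  obtain ⟨b, hb⟩ := exists_norm_eq (ℂ ∙ a)ᗮ hr
  exact ⟨b, Submodule.mem_orthogonal_singleton_iff_inner_right.1 b.2, hb⟩

theorem exists_ne_norm_eq_one_and_inner_eq_one (hdim : 1 < finrank ℂ E) {y : E} (hy : 1 < ‖y‖) :
    ∃ z₁ z₂ : E, z₁ ≠ z₂ ∧ (‖z₁‖ = 1 ∧ inner ℂ z₁ y = 1) ∧ (‖z₂‖ = 1 ∧ inner ℂ z₂ y = 1) := by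
  have hr : 0 < 1 - (‖y‖ ^ 2)⁻¹ := sub_pos.2 (inv_lt_one_of_one_lt₀ (one_lt_pow₀ hy two_ne_zero))
  have hy_ne : y ≠ 0 := norm_pos_iff.1 (zero_lt_one.trans hy)
  obtain ⟨g, hyg, hg⟩ := exists_inner_eq_zero_and_norm_eq hdim y (Real.sqrt_pos.2 hr).le
  have hg_ne : g ≠ 0 := norm_pos_iff.1 (hg ▸ Real.sqrt_pos.2 hr)
  have hg_sq : ‖g‖ ^ 2 = 1 - (‖y‖ ^ 2)⁻¹ := by rw [hg, Real.sq_sqrt hr.le]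
  have : IsAddTorsionFree E := .of_isTorsionFree ℂ E
  exact ⟨_, _, fun h => hg_ne (self_eq_neg.1 (add_left_cancel h)),
    norm_eq_one_and_inner_eq_one_of_orthogonal hy_ne hyg hg_sq,
    norm_eq_one_and_inner_eq_one_of_orthogonal hy_ne (by rw [inner_neg_right, hyg, neg_zero])
      (by rwa [norm_neg])⟩

theorem eq_zero_of_forall_inner_eq_one {M : Type*} [AddCommGroup M] [Module ℂ M]
    (hdim : 1 < finrank ℂ E) {y : E} (hy : 1 < ‖y‖) (L : E →ₗ[ℂ] M)
    (hL : ∀ z : E, ‖z‖ = 1 → inner ℂ z y = 1 → ∀ v, inner ℂ z v = 0 → L v = 0) : L = 0 := by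
  obtain ⟨z₁, z₂, hne, ⟨hz₁, hzy₁⟩, ⟨hz₂, hzy₂⟩⟩ := exists_ne_norm_eq_one_and_inner_eq_one hdim hy
  have h_le_ker : ∀ z, ‖z‖ = 1 → inner ℂ z y = 1 → (ℂ ∙ z)ᗮ ≤ LinearMap.ker L :=
    fun z hz hzy v hv => hL z hz hzy v (Submodule.mem_orthogonal_singleton_iff_inner_right.1 hv)
  have h_top : (ℂ ∙ z₁)ᗮ ⊔ (ℂ ∙ z₂)ᗮ = ⊤ :=
    orthogonal_sup_orthogonal_eq_top (disjoint_span_singleton_of_inner_eq_one hne hzy₁ hzy₂)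
  exact LinearMap.ker_eq_top.1 (top_le_iff.1
    (h_top ▸ sup_le (h_le_ker z₁ hz₁ hzy₁) (h_le_ker z₂ hz₂ hzy₂)))

end Hermitian

section OrthogonalityPreserving

variable {V : Type*} [NormedAddCommGroup V] [NormedSpace ℂ V] [CompleteSpace V]

theorem exists_orthogonal_pair_ne_zero {E : Type*} [NormedAddCommGroup E] [InnerProductSpace ℂ E]
    [FiniteDimensional ℂ E] (hdim : 1 < finrank ℂ E) {G : E → V} {ε : ℝ}
    (hG : DifferentiableOn ℂ G (ball 0 ε)) {a : E} (ha : a ∈ ball 0 ε) (hGa : G a ≠ 0) :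
    ∃ x ∈ ball (0 : E) ε, ∃ y ∈ ball (0 : E) ε, inner ℂ x y = 0 ∧ G x ≠ 0 ∧ G y ≠ 0 := by
  by_contra! h_zero
  have hε : 0 < ε := pos_of_mem_ball ha
  obtain ⟨b, hab, hb_norm⟩ := exists_inner_eq_zero_and_norm_eq hdim a (half_pos hε).le
  have hb : b ∈ ball (0 : E) ε := by simpa [hb_norm] using half_lt_self hε
  have hb_ne : b ≠ 0 := norm_pos_iff.1 (hb_norm ▸ half_pos hε)
  -- `P y` is the component of `a` orthogonal to `y`; it is close to `P b = a` when `y` is close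
  -- to `b`, so `G (P y) ≠ 0`, which forces `G y = 0`.
  let P : E → E := fun y => a - (inner ℂ y a / inner ℂ y y) • y
  have hP_orth : ∀ y, y ≠ 0 → inner ℂ (P y) y = 0 := by
    intro y hy
    have hyy : inner ℂ y y ≠ (0 : ℂ) := inner_self_ne_zero.2 hy
    rw [inner_eq_zero_symm, inner_sub_right, inner_smul_right, div_mul_cancel₀ _ hyy, sub_self]
  have hPb : P b = a := by simp [P, inner_eq_zero_symm.1 hab]
  have hP_tendsto : Tendsto P (𝓝 b) (𝓝 a) := by
    have h_cont : ContinuousAt P b := by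
      have hbb : inner ℂ b b ≠ (0 : ℂ) := inner_self_ne_zero.2 hb_ne
      fun_prop (disch := assumption)
    simpa only [hPb] using h_cont.tendsto
  have h_near_a : ∀ᶠ x in 𝓝 a, x ∈ ball 0 ε ∧ G x ≠ 0 :=
    (isOpen_ball.eventually_mem ha).and
      ((hG.continuousOn.continuousAt (isOpen_ball.mem_nhds ha)).eventually_ne hGa)
  have h_near_b : G =ᶠ[𝓝 b] fun _ => 0 := by
    filter_upwards [hP_tendsto.eventually h_near_a, isOpen_ball.eventually_mem hb,
      isOpen_ne.eventually_mem hb_ne] with y hPy hy hy_ne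
    exact h_zero (P y) hPy.1 y hy (hP_orth y hy_ne) hPy.2
  exact hGa (eqOn_of_convex_of_eventuallyEq isOpen_ball (convex_ball 0 ε) hG
    (differentiableOn_const 0) hb h_near_b ha)

theorem exists_pairwise_orthogonal_ne_zero {E : Type*} [NormedAddCommGroup E]
    [InnerProductSpace ℂ E] [FiniteDimensional ℂ E] {G : E → V} {ε : ℝ}
    (hG : DifferentiableOn ℂ G (ball 0 ε)) {a : E} (ha : a ∈ ball 0 ε) (hGa : G a ≠ 0) {n : ℕ}
    (hn : n < finrank ℂ E) :
    ∃ v : Fin (n + 1) → E, (Pairwise fun i j => inner ℂ (v i) (v j) = 0) ∧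
      ∀ i, v i ∈ ball 0 ε ∧ G (v i) ≠ 0 := by
  induction n generalizing E with
  | zero =>
    exact ⟨fun _ => a, Subsingleton.pairwise (α := Fin 1), fun _ => ⟨ha, hGa⟩⟩
  | succ n ih =>
    obtain ⟨x, hx, y, hy, hxy, hGx, hGy⟩ := exists_orthogonal_pair_ne_zero (by lia) hG ha hGa
    have h_finrank := finrank_le_finrank_orthogonal_span_singleton_add_one x
    have hG_restrict : DifferentiableOn ℂ (fun u : (ℂ ∙ x)ᗮ => G u) (ball 0 ε) :=
      hG.comp (Submodule.subtypeL _).differentiable.differentiableOn fun u hu => by simpa using hu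
    obtain ⟨v, hv_orth, hv⟩ := ih hG_restrict
      (a := ⟨y, Submodule.mem_orthogonal_singleton_iff_inner_right.2 hxy⟩)
      (by simpa using hy) hGy (by lia)
    have hxv : ∀ i, inner ℂ x (v i : E) = 0 := fun i =>
      Submodule.mem_orthogonal_singleton_iff_inner_right.1 (v i).2
    refine ⟨Fin.cons x fun i => v i, ?_, Fin.cases ⟨hx, hGx⟩ fun i => ?_⟩
    · refine Fin.cases (Fin.cases (by simp) fun j _ => hxv j) fun i => Fin.cases
        (fun _ => inner_eq_zero_symm.1 (hxv i)) fun j hij => hv_orth ?_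
      exact fun h => hij (congrArg Fin.succ h)
    · exact ⟨by simpa using (hv i).1, (hv i).2⟩

end OrthogonalityPreserving

theorem eqOn_zero_of_forall_inner_eq_zero_of_finrank_lt {E V : Type*} [NormedAddCommGroup E]
    [InnerProductSpace ℂ E] [FiniteDimensional ℂ E] [NormedAddCommGroup V]
    [InnerProductSpace ℂ V] [CompleteSpace V]
    {W : Submodule ℂ V} [FiniteDimensional ℂ W] (hdim : finrank ℂ W < finrank ℂ E)
    {G : E → V} {ε : ℝ} (hG : DifferentiableOn ℂ G (ball 0 ε))
    (hGW : ∀ a ∈ ball (0 : E) ε, G a ∈ W)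
    (horth : ∀ a ∈ ball (0 : E) ε, ∀ b ∈ ball (0 : E) ε, inner ℂ a b = 0 →
      inner ℂ (G a) (G b) = 0) :
    Set.EqOn G 0 (ball 0 ε) := by
  intro a ha
  by_contra hGa
  obtain ⟨v, hv_orth, hv⟩ := exists_pairwise_orthogonal_ne_zero hG ha hGa hdim
  have h_indep : LinearIndependent ℂ (fun i => G (v i)) :=
    linearIndependent_of_ne_zero_of_inner_eq_zero (fun i => (hv i).2)
      fun i j hij => horth _ (hv i).1 _ (hv j).1 (hv_orth hij)
  have h_le : Submodule.span ℂ (Set.range fun i => G (v i)) ≤ W :=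
    Submodule.span_le.2 (Set.range_subset_iff.2 fun i => hGW _ (hv i).1)
  have h_card := Submodule.finrank_mono h_le
  rw [finrank_span_eq_card h_indep, Fintype.card_fin] at h_card
  lia

section OrthogonalMap

variable {E V ι : Type*} [NormedAddCommGroup E] [InnerProductSpace ℂ E]
  [NormedAddCommGroup V] [InnerProductSpace ℂ V] [DecidableEq ι]

/-- A local orthogonal map in chart form, without coordinates: the Hermitian spaces `E` and `V`
replace the spaces of row vectors `ℂ^{1×s}` and `ℂ^{1×s'}`, and `Φ p z` is the `p`-th row of the
matrix `F(z)`. As `inner` is conjugate-linear in its first argument, `z · wᴴ` is `inner ℂ w z`. -/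
structure IsOrthogonalMapOn (Φ : ι → E → V) (U : Set E) : Prop where
  differentiableOn (p : ι) : DifferentiableOn ℂ (Φ p) U
  inner_eq_ite {z w : E} (hz : z ∈ U) (hw : w ∈ U) (hzw : inner ℂ z w = 1) (p q : ι) :
    inner ℂ (Φ p z) (Φ q w) = if p = q then 1 else 0

namespace IsOrthogonalMapOn

variable {Φ : ι → E → V} {U : Set E} {z : E}

theorem orthonormal (hΦ : IsOrthogonalMapOn Φ U) (hzU : z ∈ U) (hz : ‖z‖ = 1) :
    Orthonormal ℂ fun p => Φ p z :=
  orthonormal_iff_ite.2 (hΦ.inner_eq_ite hzU hzU (inner_self_eq_one_of_norm_eq_one hz))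

theorem inner_sub_eq_zero (hΦ : IsOrthogonalMapOn Φ U) (hzU : z ∈ U) (hz : ‖z‖ = 1) {x : E}
    (hx : x ∈ U) (hzx : inner ℂ z x = 1) (p q : ι) :
    inner ℂ (Φ q z) (Φ p x - Φ p z) = 0 := by
  rw [inner_sub_right, hΦ.inner_eq_ite hzU hx hzx,
    hΦ.inner_eq_ite hzU hzU (inner_self_eq_one_of_norm_eq_one hz), sub_self]

theorem inner_sub_sub_eq_zero (hΦ : IsOrthogonalMapOn Φ U) (hzU : z ∈ U) (hz : ‖z‖ = 1) {x y : E}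
    (hx : x ∈ U) (hy : y ∈ U) (hzx : inner ℂ z x = 1) (hzy : inner ℂ z y = 1)
    (hxy : inner ℂ x y = 1) (p q : ι) :
    inner ℂ (Φ p x - Φ p z) (Φ q y - Φ q z) = 0 := by
  have hxz : inner ℂ x z = 1 := by rw [← inner_conj_symm, hzx, map_one]
  rw [inner_sub_left, hΦ.inner_sub_eq_zero hzU hz hy hzy, inner_sub_right,
    hΦ.inner_eq_ite hx hy hxy, hΦ.inner_eq_ite hx hzU hxz, sub_self, sub_self]

variable [FiniteDimensional ℂ E] [FiniteDimensional ℂ V] [Fintype ι]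

theorem eq_of_inner_eq_one (hΦ : IsOrthogonalMapOn Φ U)
    (hdim : finrank ℂ V + 1 < finrank ℂ E + Fintype.card ι) (hz : ‖z‖ = 1) {ρ : ℝ}
    (hU : ball z ρ ⊆ U) {x : E} (hx : x ∈ ball z ρ) (hzx : inner ℂ z x = 1) (p : ι) :
    Φ p x = Φ p z := by
  have : CompleteSpace V := FiniteDimensional.complete ℂ V
  have hzz : inner ℂ z z = (1 : ℂ) := inner_self_eq_one_of_norm_eq_one hz
  have hzU : z ∈ U := hU (mem_ball_self (pos_of_mem_ball hx))
  let rows : Submodule ℂ V := Submodule.span ℂ (Set.range fun q => Φ q z)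
  have h_finrank : finrank ℂ rowsᗮ < finrank ℂ (ℂ ∙ z)ᗮ := by
    have h_rows : finrank ℂ rows = Fintype.card ι :=
      finrank_span_eq_card (hΦ.orthonormal hzU hz).linearIndependent
    have h_compl := rows.finrank_add_finrank_orthogonal
    have h_tangent := finrank_le_finrank_orthogonal_span_singleton_add_one z
    lia
  let G : (ℂ ∙ z)ᗮ → V := fun u => Φ p (z + u) - Φ p z
  have h_mem : ∀ u ∈ ball (0 : (ℂ ∙ z)ᗮ) ρ, z + u ∈ U := fun u hu => hU (by simpa using hu)
  have hzu : ∀ u : (ℂ ∙ z)ᗮ, inner ℂ z (u : E) = 0 := fun u =>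
    Submodule.mem_orthogonal_singleton_iff_inner_right.1 u.2
  have hz_add : ∀ u : (ℂ ∙ z)ᗮ, inner ℂ z (z + u) = 1 := fun u => by
    rw [inner_add_right, hzz, hzu, add_zero]
  have hG : DifferentiableOn ℂ G (ball 0 ρ) :=
    ((hΦ.differentiableOn p).comp
      ((Submodule.subtypeL _).differentiable.const_add z).differentiableOn h_mem).sub_const _
  have hG_rows : ∀ u ∈ ball 0 ρ, G u ∈ rowsᗮ := fun u hu =>
    mem_orthogonal_span_range fun q => hΦ.inner_sub_eq_zero hzU hz (h_mem u hu) (hz_add u) p q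
  have hG_orth : ∀ u ∈ ball 0 ρ, ∀ v ∈ ball 0 ρ, inner ℂ u v = 0 → inner ℂ (G u) (G v) = 0 := by
    intro u hu v hv huv
    have h_add_add : inner ℂ (z + u) (z + v : E) = 1 := by
      rw [inner_add_left, hz_add, inner_add_right, inner_eq_zero_symm.1 (hzu u),
        ← Submodule.coe_inner, huv, add_zero, add_zero]
    exact hΦ.inner_sub_sub_eq_zero hzU hz (h_mem u hu) (h_mem v hv) (hz_add u) (hz_add v)
      h_add_add p p
  have hx_sub : x - z ∈ (ℂ ∙ z)ᗮ := Submodule.mem_orthogonal_singleton_iff_inner_right.2 (by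
    rw [inner_sub_right, hzx, hzz, sub_self])
  have hGx : G ⟨x - z, hx_sub⟩ = 0 :=
    eqOn_zero_of_forall_inner_eq_zero_of_finrank_lt h_finrank hG hG_rows hG_orth
      (by simpa [dist_eq_norm] using hx)
  simpa only [G, add_sub_cancel, sub_eq_zero] using hGx

theorem fderiv_apply_eq_zero (hΦ : IsOrthogonalMapOn Φ U)
    (hdim : finrank ℂ V + 1 < finrank ℂ E + Fintype.card ι) (hz : ‖z‖ = 1) {ρ : ℝ}
    (hU : ball z ρ ⊆ U) {y v : E} (hy : y ∈ ball z ρ) (hzy : inner ℂ z y = 1)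
    (hzv : inner ℂ z v = 0) (p : ι) : fderiv ℂ (Φ p) y v = 0 := by
  have h_diff : DifferentiableAt ℂ (Φ p) y :=
    ((hΦ.differentiableOn p).mono hU).differentiableAt (isOpen_ball.mem_nhds hy)
  have h_line : Tendsto (fun t : ℂ => y + t • v) (𝓝 0) (𝓝 y) :=
    Continuous.tendsto' (by fun_prop) _ _ (by simp)
  have h_const : (fun t : ℂ => Φ p (y + t • v)) =ᶠ[𝓝 0] fun _ => Φ p z := by
    filter_upwards [h_line.eventually (isOpen_ball.eventually_mem hy)] with t ht
    refine hΦ.eq_of_inner_eq_one hdim hz hU ht ?_ p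
    rw [inner_add_right, inner_smul_right, hzy, hzv, mul_zero, add_zero]
  exact (h_diff.hasFDerivAt.hasLineDerivAt v).unique
    ((hasDerivAt_const (0 : ℂ) (Φ p z)).congr_of_eventuallyEq h_const)

theorem eventually_fderiv_eq_zero_of_one_lt_norm (hΦ : IsOrthogonalMapOn Φ U)
    (hdim : finrank ℂ V + 1 < finrank ℂ E + Fintype.card ι) (hopen : IsOpen U) (hzU : z ∈ U)
    (hz : ‖z‖ = 1) (p : ι) : ∀ᶠ y in 𝓝 z, 1 < ‖y‖ → fderiv ℂ (Φ p) y = 0 := by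
  have hE : 1 < finrank ℂ E := by
    have h_card := (hΦ.orthonormal hzU hz).linearIndependent.fintype_card_le_finrank
    lia
  obtain ⟨δ, hδ, hδU⟩ := Metric.isOpen_iff.1 hopen z hzU
  obtain ⟨ρ, hρ, hρδ⟩ : ∃ ρ : ℝ, 0 < ρ ∧ 3 * ρ = δ := ⟨δ / 3, by positivity, by ring⟩
  have h_norm : ∀ᶠ y in 𝓝 z, ‖y‖ ^ 2 < 1 + ρ ^ 2 :=
    (continuous_norm.pow 2).continuousAt.eventually_lt continuousAt_const (by simp [hz, hρ])
  filter_upwards [ball_mem_nhds z hρ, h_norm] with y hyz hy_norm hy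
  refine ContinuousLinearMap.coe_injective
    (eq_zero_of_forall_inner_eq_one hE hy _ fun w hw hwy v hwv => ?_)
  have h_dist : dist y w < ρ := by
    rw [dist_eq_norm]
    refine lt_of_pow_lt_pow_left₀ 2 hρ.le ?_
    rw [norm_sub_sq_of_inner_eq_one hw hwy]
    linarith
  have h_ball : ball w ρ ⊆ U := by
    refine (ball_subset_ball' ?_).trans hδU
    linarith [dist_triangle_left w z y, mem_ball.1 hyz]
  exact hΦ.fderiv_apply_eq_zero hdim hw h_ball h_dist hwy hwv p

theorem exists_eventuallyEq_const (hΦ : IsOrthogonalMapOn Φ U)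
    (hdim : finrank ℂ V + 1 < finrank ℂ E + Fintype.card ι) (hopen : IsOpen U) (hzU : z ∈ U)
    (hz : ‖z‖ = 1) (p : ι) : ∃ y ∈ U, Φ p =ᶠ[𝓝 y] fun _ => Φ p y := by
  have h_outside := hΦ.eventually_fderiv_eq_zero_of_one_lt_norm hdim hopen hzU hz p
  obtain ⟨y, hy_norm, hy_fderiv, hyU⟩ := ((frequently_nhds_one_lt_norm hz).and_eventually
    (h_outside.eventually_nhds.and (hopen.eventually_mem hzU))).exists
  have h_near : ∀ᶠ x in 𝓝 y, x ∈ U ∧ fderiv ℂ (Φ p) x = 0 := by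
    filter_upwards [hopen.eventually_mem hyU, hy_fderiv,
      (isOpen_lt continuous_const continuous_norm).eventually_mem hy_norm] with x hxU hx hx_norm
    exact ⟨hxU, hx hx_norm⟩
  obtain ⟨r, hr, h_ball⟩ := Metric.eventually_nhds_iff_ball.1 h_near
  refine ⟨y, hyU, ?_⟩
  filter_upwards [ball_mem_nhds y hr] with x hx
  exact isOpen_ball.is_const_of_fderiv_eq_zero (convex_ball y r).isPreconnected
    ((hΦ.differentiableOn p).mono fun w hw => (h_ball w hw).1) (fun w hw => (h_ball w hw).2)
    hx (mem_ball_self hr)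

theorem eq_of_isPreconnected (hΦ : IsOrthogonalMapOn Φ U)
    (hdim : finrank ℂ V + 1 < finrank ℂ E + Fintype.card ι) (hopen : IsOpen U)
    (hconn : IsPreconnected U) (hnull : ∃ z ∈ U, ‖z‖ = 1) (p : ι) {x y : E} (hx : x ∈ U)
    (hy : y ∈ U) : Φ p x = Φ p y := by
  have : CompleteSpace V := FiniteDimensional.complete ℂ V
  obtain ⟨z, hzU, hz⟩ := hnull
  obtain ⟨y₀, hy₀, h_const⟩ := hΦ.exists_eventuallyEq_const hdim hopen hzU hz p
  have h_eqOn := eqOn_of_isPreconnected_of_eventuallyEq hopen hconn (hΦ.differentiableOn p)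
    (differentiableOn_const _) hy₀ h_const
  exact (h_eqOn hx).trans (h_eqOn hy).symm

end IsOrthogonalMapOn

end OrthogonalMap

section Chart

theorem inner_eq_cdot {n : ℕ} (x y : EuclideanSpace ℂ (Fin n)) :
    inner ℂ x y = cdot (y : Fin n → ℂ) (x : Fin n → ℂ) := by
  simp [cdot, PiLp.inner_apply]

theorem norm_toLp_eq_one_of_cdot_self_eq_one {n : ℕ} {z : Fin n → ℂ} (hz : cdot z z = 1) :
    ‖WithLp.toLp 2 z‖ = 1 := by
  have h_sq : ‖WithLp.toLp 2 z‖ ^ 2 = 1 := by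
    rw [← inner_self_eq_norm_sq (𝕜 := ℂ), inner_eq_cdot, hz, RCLike.one_re]
  exact (pow_eq_one_iff_of_nonneg (norm_nonneg _) two_ne_zero).1 h_sq

theorem mul_conjTranspose_apply_eq_cdot {m n : ℕ} (A B : Fin m → Fin n → ℂ) (p q : Fin m) :
    (Matrix.of A * (Matrix.of B)ᴴ) p q = cdot (A p) (B q) := rfl

variable {s r' s' : ℕ} {U : Set (Fin s → ℂ)} {F : (Fin s → ℂ) → Fin r' → Fin s' → ℂ}

theorem isOrthogonalMapOn_of_chart (hF : DifferentiableOn ℂ F U)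
    (horth : ∀ z ∈ U, ∀ w ∈ U, cdot z w = 1 →
      Matrix.of (F z) * (Matrix.of (F w))ᴴ = (1 : Matrix (Fin r') (Fin r') ℂ)) :
    IsOrthogonalMapOn (E := EuclideanSpace ℂ (Fin s))
      (fun p x => WithLp.toLp 2 (F x.ofLp p)) (WithLp.ofLp ⁻¹' U) where
  differentiableOn p :=
    (EuclideanSpace.equiv (Fin s') ℂ).symm.differentiable.comp_differentiableOn
      ((differentiableOn_pi.1 hF p).comp
        (EuclideanSpace.equiv (Fin s) ℂ).differentiable.differentiableOn (Set.mapsTo_preimage _ U))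
  inner_eq_ite {z w} hz hw hzw p q := by
    have h_entry := congrFun₂ (horth w.ofLp hw z.ofLp hz (by rwa [← inner_eq_cdot])) q p
    rw [mul_conjTranspose_apply_eq_cdot, Matrix.one_apply] at h_entry
    rw [inner_eq_cdot, h_entry]
    simp only [eq_comm]

end Chart

theorem constancy_small_codim_general
    (s r' s' : ℕ) (hcodim : (s' : ℤ) - (r' : ℤ) < (s : ℤ) - 1)
    (U : Set (Fin s → ℂ)) (hopen : IsOpen U) (hconn : IsPreconnected U)
    (hnull : ∃ z ∈ U, cdot z z = 1)
    (F : (Fin s → ℂ) → Fin r' → Fin s' → ℂ)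
    (hF : DifferentiableOn ℂ F U)
    (horth : ∀ z ∈ U, ∀ w ∈ U, cdot z w = 1 →
      Matrix.of (F z) * (Matrix.of (F w))ᴴ = (1 : Matrix (Fin r') (Fin r') ℂ)) :
    ∀ z ∈ U, ∀ w ∈ U, F z = F w := by
  let e : EuclideanSpace ℂ (Fin s) ≃ₜ (Fin s → ℂ) := PiLp.homeomorph 2 _
  have h_null : ∃ z ∈ e ⁻¹' U, ‖z‖ = 1 :=
    hnull.elim fun z hz => ⟨WithLp.toLp 2 z, hz.1, norm_toLp_eq_one_of_cdot_self_eq_one hz.2⟩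
  have hdim : finrank ℂ (EuclideanSpace ℂ (Fin s')) + 1 <
      finrank ℂ (EuclideanSpace ℂ (Fin s)) + Fintype.card (Fin r') := by
    simp only [finrank_euclideanSpace_fin, Fintype.card_fin]
    lia
  intro z hz w hw
  funext p
  exact congrArg WithLp.ofLp ((isOrthogonalMapOn_of_chart hF horth).eq_of_isPreconnected hdim
    (hopen.preimage e.continuous) (e.isPreconnected_preimage.2 hconn) h_null p
    (x := WithLp.toLp 2 z) (y := WithLp.toLp 2 w) hz hw)

/-- Let `s ≥ 2` and `2 ≤ r' ≤ s'` with `s' − r' < s − 1`.  A local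
orthogonal map in chart form from `𝒢(1,s)` to `𝒢(r',s')` (a holomorphic `F` on an open
connected `U ⊆ ℂ^{1×s}` containing a null point, with `F(z)·F(w)ᴴ = I` whenever
`z·wᴴ = 1`) is constant on `U`. -/
theorem constancy_small_codim
    (s r' s' : ℕ) (hs : 2 ≤ s) (hr' : 2 ≤ r') (hr's' : r' ≤ s')
    (hcodim : (s' : ℤ) - (r' : ℤ) < (s : ℤ) - 1)
    (U : Set (Fin s → ℂ)) (hopen : IsOpen U) (hconn : IsPreconnected U)
    (hnull : ∃ z ∈ U, cdot z z = 1)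
    (F : (Fin s → ℂ) → Fin r' → Fin s' → ℂ)
    (hF : DifferentiableOn ℂ F U)
    (horth : ∀ z ∈ U, ∀ w ∈ U, cdot z w = 1 →
      Matrix.of (F z) * (Matrix.of (F w))ᴴ = (1 : Matrix (Fin r') (Fin r') ℂ)) :
    ∀ z ∈ U, ∀ w ∈ U, F z = F w := by
  exact constancy_small_codim_general s r' s' hcodim U hopen hconn hnull F hF horth
end
end

section
/- Let s ≥ 2 and 2 ≤ r' ≤ s' be integers with s − 1 ≤ s' − r' < 2s − 2. Let F : U → ℂ^{r'×s'} be a nonconstant local orthogonal map in chart form from 𝒢(1,s) to 𝒢(r',s'). Then there exist a (1,s)-unitary matrix M ∈ GL(1+s, ℂ) and an (r',s')-unitary matrix M' ∈ GL(r'+s', ℂ) such that for every z ∈ U, rowSpan([I_{r'} | F(z)] · M') = rowSpan(Φ((1, z) · M)); i.e. after composing with automorphisms of 𝒢(1,s) and 𝒢(r',s'), F is the standard linear embedding [z₀, z] ↦ (I 0 I 0 0; 0 z₀ 0 z 0). -/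
open scoped BigOperators
open Matrix

noncomputable section

/-- Signature matrix `I_{a,b} = diag(I_a, −I_b)`. -/
def sigMat (a b : ℕ) : Matrix (Fin (a + b)) (Fin (a + b)) ℂ :=
  Matrix.diagonal fun i => if (i : ℕ) < a then (1 : ℂ) else -1

/-- Row span of a matrix: the ℂ-linear span of its rows. -/
def rowSpan {m n : ℕ} (A : Matrix (Fin m) (Fin n) ℂ) : Submodule ℂ (Fin n → ℂ) :=
  Submodule.span ℂ (Set.range fun i => A i)

/-- The chart matrix `[I_r | Z]`. -/
def chartMat (r s : ℕ) (Z : Matrix (Fin r) (Fin s) ℂ) : Matrix (Fin r) (Fin (r + s)) ℂ :=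
  Matrix.of fun i j =>
    if h : (j : ℕ) < r then (if (i : ℕ) = (j : ℕ) then 1 else 0)
    else Z i ⟨(j : ℕ) - r, by have := j.isLt; omega⟩

/-- The row vector `(1, z) ∈ ℂ^{1+s}`. -/
def onecons {s : ℕ} (z : Fin s → ℂ) : Fin (1 + s) → ℂ :=
  fun j => if h : (j : ℕ) = 0 then 1 else z ⟨(j : ℕ) - 1, by have := j.isLt; omega⟩

/-- For a row vector `v = (v₀, v₁, …, v_s) ∈ ℂ^{1+s}`, `Phi r' s' s v` is the
`r'×(r'+s')` matrix with column blocks of sizes `r'−1, 1, r'−1, s, s'−s−r'+1`, whose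
first `r'−1` rows form the block row `[I_{r'−1}, 0, I_{r'−1}, 0, 0]` and whose last row
is `[0, v₀, 0, (v₁,…,v_s), 0]`. -/
def Phi (r' s' s : ℕ) (v : Fin (1 + s) → ℂ) : Matrix (Fin r') (Fin (r' + s')) ℂ :=
  Matrix.of fun i j =>
    if (i : ℕ) < r' - 1 then
      if (j : ℕ) < r' - 1 then (if (i : ℕ) = (j : ℕ) then 1 else 0)
      else if r' ≤ (j : ℕ) ∧ (j : ℕ) < 2 * r' - 1 then
        (if (i : ℕ) = (j : ℕ) - r' then 1 else 0)
      else 0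
    else
      if (j : ℕ) = r' - 1 then v ⟨0, by omega⟩
      else if h : 2 * r' - 1 ≤ (j : ℕ) ∧ (j : ℕ) < 2 * r' - 1 + s then
        v ⟨(j : ℕ) - (2 * r' - 1) + 1, by omega⟩
      else 0

/-! For a null point `w` and `ξ ∈ w^⊥`, the differences `F (w + ξ) - F w` have their range in the
orthogonal complement of the range of `F w`, of dimension `s' - r'`, and those for orthogonal `ξ`
are orthogonal. If two of them were independent on one null line `w + ℂ ξ`, then, the unitary group
being a uniqueness set for holomorphic functions, the same would hold along an orthogonal basis of
`w^⊥`, giving `2 (s - 1) > s' - r'` independent vectors. So all differences on a null line are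
parallel. By uniqueness again, `F z - F w` has rank at most one for all `z` and `w`, and `F` turns
out to vary only along one unit vector `α`: it is constant on `α^⊥`, and `f z = F z α` maps null
lines to lines.

Since `⟪f w, f z⟫ = 1` when `⟪w, z⟫ = 1`, this makes `f` the projective action of an isometry `T` of
Lorentz forms. The constant values of `F` on `α^⊥` are orthogonal to the image of `T`; completing
the two to a frame gives the inverse of the required automorphism of the target. -/

section CurveHolomorphy

open Set Filter Topology

variable {E E' G : Type*} [NormedAddCommGroup E] [NormedSpace ℂ E] [NormedAddCommGroup E']
  [NormedSpace ℂ E'] [NormedAddCommGroup G] [NormedSpace ℂ G] {V : Set E}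

/-- Holomorphy along every holomorphic curve in `V`. It stands in for holomorphy in several
variables, for which the inheritance of holomorphy by derivatives is not available. -/
def CurveHolomorphicOn (h : E → G) (V : Set E) : Prop :=
  ∀ (D : Set ℂ) (γ : ℂ → E), IsOpen D → DifferentiableOn ℂ γ D → MapsTo γ D V →
    DifferentiableOn ℂ (h ∘ γ) D

namespace CurveHolomorphicOn

theorem of_differentiableOn {h : E → G} (hh : DifferentiableOn ℂ h V) :
    CurveHolomorphicOn h V :=
  fun _ _ _ hγ hm => hh.comp hγ hm

theorem mono {h : E → G} {W : Set E} (hh : CurveHolomorphicOn h V) (hW : W ⊆ V) :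
    CurveHolomorphicOn h W :=
  fun D γ hD hγ hm => hh D γ hD hγ (hm.mono_right hW)

theorem comp_differentiableOn {h : E → G} (hh : CurveHolomorphicOn h V) {g : E' → E}
    {W : Set E'} (hg : DifferentiableOn ℂ g W) (hm : MapsTo g W V) :
    CurveHolomorphicOn (h ∘ g) W :=
  fun D γ hD hγ hγm => hh D (g ∘ γ) hD (hg.comp hγ hγm) (hm.comp hγm)

theorem smul {h : E → ℂ} {k : E → G} (hh : CurveHolomorphicOn h V)
    (hk : CurveHolomorphicOn k V) : CurveHolomorphicOn (fun x => h x • k x) V :=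
  fun D γ hD hγ hm => (hh D γ hD hγ hm).smul (hk D γ hD hγ hm)

theorem finset_prod {ι : Type*} {h : ι → E → ℂ} {s : Finset ι}
    (hh : ∀ i ∈ s, CurveHolomorphicOn (h i) V) :
    CurveHolomorphicOn (fun x => ∏ i ∈ s, h i x) V := fun D γ hD hγ hm =>
  DifferentiableOn.fun_finsetProd fun i hi => hh i hi D γ hD hγ hm

theorem matrix_det {n : Type*} [Fintype n] [DecidableEq n] {M : E → Matrix n n ℂ}
    (hM : ∀ i j, CurveHolomorphicOn (fun x => M x i j) V) :
    CurveHolomorphicOn (fun x => (M x).det) V := fun D γ hD hγ hm => by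
  simp only [Function.comp_def, Matrix.det_apply']
  exact DifferentiableOn.fun_sum fun σ _ =>
    (DifferentiableOn.fun_finsetProd fun i _ => hM (σ i) i D γ hD hγ hm).const_mul _

theorem eq_zero_of_frequently_lineMap [CompleteSpace G] (hV : IsOpen V) (hVc : Convex ℝ V)
    {h : E → G} (hh : CurveHolomorphicOn h V) {x y : E} (hx : x ∈ V) (hy : y ∈ V)
    (h0 : ∃ᶠ t in 𝓝[≠] (0 : ℂ), h (AffineMap.lineMap x y t) = 0) : h y = 0 := by
  have hγ : Differentiable ℂ (AffineMap.lineMap x y : ℂ → E) :=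
    fun t => AffineMap.hasDerivAt_lineMap.differentiableAt
  have hD : IsOpen ((AffineMap.lineMap x y : ℂ → E) ⁻¹' V) := hV.preimage hγ.continuous
  have hDc : Convex ℝ ((AffineMap.lineMap x y : ℂ → E) ⁻¹' V) :=
    (hVc.translate_preimage_left x).linear_preimage
      ((LinearMap.toSpanSingleton ℂ E (y - x)).restrictScalars ℝ)
  have han := (hh _ _ hD hγ.differentiableOn (mapsTo_preimage _ _)).analyticOnNhd hD
  simpa using han.eqOn_zero_of_preconnected_of_frequently_eq_zero hDc.isPreconnected
    (show (0 : ℂ) ∈ _ by simpa using hx) h0 (show (1 : ℂ) ∈ _ by simpa using hy)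

theorem eqOn_zero_of_convex_of_eventually [CompleteSpace G] (hV : IsOpen V)
    (hVc : Convex ℝ V) {h : E → G} (hh : CurveHolomorphicOn h V) {x : E} (hx : x ∈ V)
    (h0 : ∀ᶠ y in 𝓝 x, h y = 0) :
    EqOn h 0 V := fun y hy =>
  hh.eq_zero_of_frequently_lineMap hV hVc hx hy <| by
    have hc : Tendsto (AffineMap.lineMap x y : ℂ → E) (𝓝[≠] 0) (𝓝 x) :=
      ((AffineMap.lineMap_continuous (p := x) (q := y)).tendsto' (0 : ℂ) x (by simp)).mono_left
        nhdsWithin_le_nhds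
    exact (hc.eventually h0).frequently

theorem eqOn_zero_of_isPreconnected [CompleteSpace G] (hV : IsOpen V)
    (hVc : IsPreconnected V) {h : E → G} (hh : CurveHolomorphicOn h V) {x : E} (hx : x ∈ V)
    (h0 : ∀ᶠ y in 𝓝 x, h y = 0) :
    EqOn h 0 V := by
  have hZ : V ⊆ {x | ∀ᶠ y in 𝓝 x, h y = 0} := by
    refine hVc.subset_of_closure_inter_subset isOpen_setOfPred_eventually_nhds ⟨x, hx, h0⟩ ?_
    rintro y ⟨hyZ, hyV⟩
    obtain ⟨ε, hε, hball⟩ := Metric.isOpen_iff.1 hV y hyV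
    obtain ⟨z, hz, hzy⟩ := Metric.mem_closure_iff.1 hyZ ε hε
    have hzB : z ∈ Metric.ball y ε := by rwa [Metric.mem_ball, dist_comm]
    filter_upwards [Metric.ball_mem_nhds y hε] using
      (hh.mono hball).eqOn_zero_of_convex_of_eventually Metric.isOpen_ball (convex_ball y ε) hzB hz
  exact fun y hy => (hZ hy).self_of_nhds

theorem eqOn_zero_of_smul_eq_zero (hV : IsOpen V) (hVc : Convex ℝ V) {h : E → ℂ} {k : E → G}
    (hh : CurveHolomorphicOn h V) (hk : CurveHolomorphicOn k V)
    (h0 : ∀ x ∈ V, h x • k x = 0) {x : E} (hx : x ∈ V) (hkx : k x ≠ 0) : EqOn h 0 V := by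
  intro y hy
  refine hh.eq_zero_of_frequently_lineMap hV hVc hx hy (Eventually.frequently ?_)
  have hγ : Differentiable ℂ (AffineMap.lineMap x y : ℂ → E) :=
    fun t => AffineMap.hasDerivAt_lineMap.differentiableAt
  have hD : IsOpen ((AffineMap.lineMap x y : ℂ → E) ⁻¹' V) := hV.preimage hγ.continuous
  have h0D : (0 : ℂ) ∈ (AffineMap.lineMap x y : ℂ → E) ⁻¹' V := by simpa using hx
  have hkc := (hk _ _ hD hγ.differentiableOn (mapsTo_preimage _ _)).continuousOn.continuousAt
    (hD.mem_nhds h0D)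
  refine nhdsWithin_le_nhds ?_
  filter_upwards [hD.mem_nhds h0D, hkc.eventually_ne (by simpa using hkx)] with t ht hkt
    using (smul_eq_zero.1 (h0 _ ht)).resolve_right hkt

theorem exists_forall_ne_zero (hV : IsOpen V) (hVc : Convex ℝ V) (hne : V.Nonempty) {ι : Type*}
    {h : ι → E → ℂ} (hh : ∀ i, CurveHolomorphicOn (h i) V) (h0 : ∀ i, ∃ x ∈ V, h i x ≠ 0)
    (s : Finset ι) : ∃ x ∈ V, ∀ i ∈ s, h i x ≠ 0 := by
  classical
  induction s using Finset.induction with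
  | empty => exact hne.imp fun x hx => ⟨hx, by simp⟩
  | insert i s hi ih =>
    obtain ⟨x, hx, hsx⟩ := ih
    by_contra! hcon
    obtain ⟨y, hy, hiy⟩ := h0 i
    refine hiy (eqOn_zero_of_smul_eq_zero hV hVc (hh i) (finset_prod fun j _ => hh j) ?_ hx
      (Finset.prod_ne_zero_iff.2 hsx) hy)
    intro z hz
    obtain ⟨j, hj, hjz⟩ := hcon z hz
    rcases Finset.mem_insert.1 hj with rfl | hj
    · simp [hjz]
    · rw [Finset.prod_eq_zero hj hjz, smul_zero]

end CurveHolomorphicOn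

end CurveHolomorphy

section DerivativeInParameter

open Set Filter Topology Metric

variable {E G : Type*} [NormedAddCommGroup E] [NormedSpace ℂ E] [NormedAddCommGroup G]
  [NormedSpace ℂ G]

theorem norm_dslope_sub_deriv_le [CompleteSpace G] {g : ℂ → G} {c : ℂ} {ρ M : ℝ}
    (hg : DifferentiableOn ℂ g (ball c ρ)) (hM : MapsTo g (ball c ρ) (closedBall (g c) M))
    {t : ℂ} (ht : t ∈ ball c ρ) : ‖dslope g c t - deriv g c‖ ≤ 2 * (M / ρ) / ρ * dist t c := by
  have hc : c ∈ ball c ρ := mem_ball_self (pos_of_mem_ball ht)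
  rw [← dslope_same g c, ← dist_eq_norm]
  refine Complex.dist_le_div_mul_dist_of_mapsTo_ball
    ((Complex.differentiableOn_dslope (isOpen_ball.mem_nhds hc)).2 hg) (fun u hu => ?_) ht
  rw [mem_closedBall, two_mul]
  exact (dist_le_norm_add_norm _ _).trans (add_le_add
    (Complex.norm_dslope_le_div_of_mapsTo_ball hg hM hu)
    (Complex.norm_dslope_le_div_of_mapsTo_ball hg hM hc))

theorem differentiableAt_deriv_parameter [CompleteSpace G] {O : Set (ℂ × ℂ)} (hO : IsOpen O)
    {g : ℂ × ℂ → G} (hg : DifferentiableOn ℂ g O) {l t₀ : ℂ} (hl : (l, t₀) ∈ O) :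
    DifferentiableAt ℂ (fun l => deriv (fun t => g (l, t)) t₀) l := by
  have hc : ContinuousAt g (l, t₀) := hg.continuousOn.continuousAt (hO.mem_nhds hl)
  obtain ⟨ρ, hρ, hball⟩ := eventually_nhds_iff_ball.1
    ((hO.eventually_mem hl).and (hc.eventually (ball_mem_nhds _ one_pos)))
  rw [← ball_prod_same] at hball
  have ht₀ : t₀ ∈ ball t₀ ρ := mem_ball_self hρ
  have hfst {t : ℂ} (ht : t ∈ ball t₀ ρ) : DifferentiableOn ℂ (fun l => g (l, t)) (ball l ρ) :=
    hg.comp (f := fun l : ℂ => (l, t)) (by fun_prop) fun m hm => (hball (m, t) ⟨hm, ht⟩).1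
  have hsnd {m : ℂ} (hm : m ∈ ball l ρ) : DifferentiableOn ℂ (fun t => g (m, t)) (ball t₀ ρ) :=
    hg.comp (f := fun t : ℂ => (m, t)) (by fun_prop) fun t ht => (hball (m, t) ⟨hm, ht⟩).1
  have hbound {m : ℂ} (hm : m ∈ ball l ρ) :
      MapsTo (fun t => g (m, t)) (ball t₀ ρ) (closedBall (g (m, t₀)) (1 + 1)) := fun t ht =>
    (dist_triangle_right _ _ (g (l, t₀))).trans
      (add_le_add (hball (m, t) ⟨hm, ht⟩).2.le (hball (m, t₀) ⟨hm, ht₀⟩).2.le)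
  have hlim : TendstoUniformlyOn (fun t m => dslope (fun t => g (m, t)) t₀ t)
      (fun m => deriv (fun t => g (m, t)) t₀) (𝓝[≠] t₀) (ball l ρ) := by
    refine tendstoUniformlyOn_iff.2 fun ε hε => ?_
    have h0 : Tendsto (fun t => 2 * ((1 + 1) / ρ) / ρ * dist t t₀) (𝓝[≠] t₀) (𝓝 0) :=
      (Continuous.tendsto' (by fun_prop) _ _ (by simp)).mono_left nhdsWithin_le_nhds
    filter_upwards [h0.eventually_lt_const hε, nhdsWithin_le_nhds (ball_mem_nhds t₀ hρ)]
      with t hε ht m hm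
    rw [dist_comm, dist_eq_norm]
    exact (norm_dslope_sub_deriv_le (hsnd hm) (hbound hm) ht).trans_lt hε
  refine (hlim.tendstoLocallyUniformlyOn.differentiableOn ?_ isOpen_ball).differentiableAt
    (ball_mem_nhds l hρ)
  filter_upwards [nhdsWithin_le_nhds (ball_mem_nhds t₀ hρ), self_mem_nhdsWithin] with t ht htne
  simp only [dslope_of_ne _ htne, slope_def_module]
  exact ((hfst ht).sub (hfst ht₀)).const_smul _

theorem CurveHolomorphicOn.fderiv_apply [CompleteSpace G] {V : Set E} (hV : IsOpen V) {f : E → G}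
    (hf : DifferentiableOn ℂ f V) :
    CurveHolomorphicOn (fun q : E × E => fderiv ℂ f q.1 q.2) (V ×ˢ univ) := by
  intro D γ hD hγ hm
  have hderiv : ∀ l ∈ D, fderiv ℂ f (γ l).1 (γ l).2 =
      deriv (fun t : ℂ => f ((γ l).1 + t • (γ l).2)) 0 := fun l hl =>
    ((hf.differentiableAt (hV.mem_nhds (hm hl).1)).lineDeriv_eq_fderiv).symm
  set φ : ℂ × ℂ → E := fun q => (γ q.1).1 + q.2 • (γ q.1).2 with hφ
  have hγ₁ : DifferentiableOn ℂ (fun q : ℂ × ℂ => γ q.1) (D ×ˢ univ) :=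
    hγ.comp (by fun_prop) fun q hq => hq.1
  have hφd : DifferentiableOn ℂ φ (D ×ˢ univ) :=
    hγ₁.fst.add (differentiableOn_snd.smul hγ₁.snd)
  have hO : IsOpen ((D ×ˢ univ) ∩ φ ⁻¹' V) :=
    hφd.continuousOn.isOpen_inter_preimage (hD.prod isOpen_univ) hV
  refine DifferentiableOn.congr (fun l hl => ?_) hderiv
  refine (differentiableAt_deriv_parameter hO (g := f ∘ φ) ?_ ?_).differentiableWithinAt
  · exact hf.comp (hφd.mono inter_subset_left) fun q hq => hq.2
  · exact ⟨⟨hl, mem_univ _⟩, by simpa [hφ] using (hm hl).1⟩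

end DerivativeInParameter

section UnitaryUniqueness

open Set Filter Topology Metric NormedSpace

variable {𝔸 G : Type*} [NormedAddCommGroup G] [NormedSpace ℂ G] [CompleteSpace G]

theorem CurveHolomorphicOn.eqOn_zero_of_skewAdjoint [NormedAddCommGroup 𝔸] [NormedSpace ℂ 𝔸]
    [StarAddMonoid 𝔸] [NormedStarGroup 𝔸] [StarModule ℂ 𝔸] {φ : 𝔸 → G} {r : ℝ}
    (hφ : CurveHolomorphicOn φ (ball 0 r)) (h0 : ∀ a ∈ skewAdjoint 𝔸, a ∈ ball 0 r → φ a = 0) :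
    EqOn φ 0 (ball 0 r) := by
  intro a ha
  rw [mem_ball_zero_iff] at ha
  set b : 𝔸 := (2⁻¹ : ℂ) • (a - star a) with hb
  have hbr : b ∈ ball 0 r := by
    rw [mem_ball_zero_iff, hb, norm_smul]
    have := norm_sub_le a (star a)
    rw [norm_star] at this
    norm_num
    linarith
  refine hφ.eq_zero_of_frequently_lineMap isOpen_ball (convex_ball 0 r) hbr
    (mem_ball_zero_iff.2 ha) ?_
  have hskew (t : ℝ) : AffineMap.lineMap b a (t * Complex.I) ∈ skewAdjoint 𝔸 := by
    rw [skewAdjoint.mem_iff, AffineMap.lineMap_apply_module', hb]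
    simp only [star_add, star_smul, star_sub, star_star, star_mul', RCLike.star_def,
      Complex.conj_ofReal, Complex.conj_I, map_inv₀, map_ofNat]
    module
  have hI : Tendsto (fun t : ℝ => (t * Complex.I : ℂ)) (𝓝[≠] 0) (𝓝[≠] 0) :=
    tendsto_nhdsWithin_iff.2 ⟨(Continuous.tendsto' (by fun_prop) _ _ (by simp)).mono_left
      nhdsWithin_le_nhds, by filter_upwards [self_mem_nhdsWithin] with t ht; simpa using ht⟩
  have hcont : Tendsto (AffineMap.lineMap b a : ℂ → 𝔸) (𝓝[≠] 0) (𝓝 b) :=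
    (AffineMap.lineMap_continuous.tendsto' (0 : ℂ) b (by simp)).mono_left nhdsWithin_le_nhds
  exact hI.frequently (((hcont.comp hI).eventually (isOpen_ball.mem_nhds hbr)).mono
    fun t ht => h0 _ (hskew t) ht).frequently

theorem CurveHolomorphicOn.eventually_eq_zero_of_unitary [NormedRing 𝔸] [NormedAlgebra ℂ 𝔸]
    [CompleteSpace 𝔸] [StarRing 𝔸] [NormedStarGroup 𝔸] [StarModule ℂ 𝔸] {V : Set 𝔸}
    (hV : V ∈ 𝓝 1) {φ : 𝔸 → G} (hφ : CurveHolomorphicOn φ V)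
    (h0 : ∀ u ∈ unitary 𝔸, u ∈ V → φ u = 0) : ∀ᶠ a in 𝓝 1, φ a = 0 := by
  let : NormedAlgebra ℚ 𝔸 := .restrictScalars ℚ ℂ 𝔸
  have hexp : HasStrictFDerivAt (exp : 𝔸 → 𝔸) (1 : 𝔸 →L[ℂ] 𝔸) 0 := hasStrictFDerivAt_exp_zero
  have hmap : map (exp : 𝔸 → 𝔸) (𝓝 0) = 𝓝 1 := by
    simpa using hexp.map_nhds_eq_of_surj (LinearMap.range_eq_top.2 fun a => ⟨a, rfl⟩)
  obtain ⟨r, hr, hball⟩ := Metric.mem_nhds_iff.1 (mem_map.1 (hmap ▸ hV))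
  have hd : Differentiable ℂ (exp : 𝔸 → 𝔸) := fun a => (exp_analytic (𝕂 := ℂ) a).differentiableAt
  have hzero := (hφ.comp_differentiableOn hd.differentiableOn hball).eqOn_zero_of_skewAdjoint
    fun a ha har => h0 _ (exp_mem_unitary_of_mem_skewAdjoint ha) (hball har)
  rw [← hmap, eventually_map]
  filter_upwards [ball_mem_nhds 0 hr] using hzero

end UnitaryUniqueness

section UnitaryOrbits

open Set Filter Topology Metric
open scoped InnerProductSpace

variable {E : Type*} [NormedAddCommGroup E] [InnerProductSpace ℂ E] [CompleteSpace E]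

theorem CurveHolomorphicOn.eqOn_zero_of_eventually_comp {𝔸 X G : Type*} [NormedAddCommGroup 𝔸]
    [NormedSpace ℂ 𝔸] [CompleteSpace 𝔸] [NormedAddCommGroup X] [NormedSpace ℂ X] [CompleteSpace X]
    [NormedAddCommGroup G] [NormedSpace ℂ G] [CompleteSpace G] {Ω : Set X} (hΩ : IsOpen Ω)
    (hΩc : IsPreconnected Ω) {h : X → G} (hh : CurveHolomorphicOn h Ω) {e : 𝔸 →L[ℂ] X}
    (he : Function.Surjective e) {a : 𝔸} (ha : e a ∈ Ω) (h0 : ∀ᶠ b in 𝓝 a, h (e b) = 0) :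
    EqOn h 0 Ω :=
  hh.eqOn_zero_of_isPreconnected hΩ hΩc ha ((e.isOpenMap he).nhds_le a h0)

theorem exists_unitary_forall_ne_zero {Ω : Set E} (hΩ : IsOpen Ω) (hΩc : IsPreconnected Ω)
    {h : E → ℂ} (hh : CurveHolomorphicOn h Ω) (h0 : ∃ x ∈ Ω, h x ≠ 0) {κ : Type*} [Finite κ]
    {v : κ → E} (hv : ∀ k, v k ∈ Ω) (hv0 : ∀ k, v k ≠ 0) :
    ∃ u ∈ unitary (E →L[ℂ] E), ∀ k, u (v k) ∈ Ω ∧ h (u (v k)) ≠ 0 := by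
  cases nonempty_fintype κ
  have hev : ∀ᶠ u : E →L[ℂ] E in 𝓝 1, ∀ k, u (v k) ∈ Ω := eventually_all.2 fun k =>
    ((ContinuousLinearMap.apply ℂ E (v k)).continuous.tendsto' 1 (v k) rfl).eventually
      (hΩ.mem_nhds (hv k))
  obtain ⟨r, hr, hball⟩ := Metric.eventually_nhds_iff_ball.1 hev
  have hcomp (k : κ) : CurveHolomorphicOn (fun u : E →L[ℂ] E => h (u (v k))) (ball 1 r) :=
    hh.comp_differentiableOn (ContinuousLinearMap.apply ℂ E (v k)).differentiable.differentiableOn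
      fun u hu => hball u hu k
  have hne (k : κ) : ∃ u ∈ ball (1 : E →L[ℂ] E) r, h (u (v k)) ≠ 0 := by
    by_contra! hcon
    obtain ⟨x, hx, hhx⟩ := h0
    refine hhx (hh.eqOn_zero_of_eventually_comp hΩ hΩc
      (e := ContinuousLinearMap.apply ℂ E (v k)) (fun y => ?_) (hv k)
      (Metric.eventually_nhds_iff_ball.2 ⟨r, hr, hcon⟩) hx)
    obtain ⟨f, hf⟩ := SeparatingDual.exists_eq_one (R := ℂ) (hv0 k)
    exact ⟨f.smulRight y, by simp [hf]⟩
  obtain ⟨a, ha, hak⟩ := CurveHolomorphicOn.exists_forall_ne_zero isOpen_ball (convex_ball 1 r)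
    (nonempty_ball.2 hr) hcomp hne Finset.univ
  by_contra! hcon
  have hprod := CurveHolomorphicOn.finset_prod (s := Finset.univ) fun k _ => hcomp k
  refine Finset.prod_ne_zero_iff.2 hak (hprod.eqOn_zero_of_convex_of_eventually isOpen_ball
    (convex_ball 1 r) (mem_ball_self hr) (hprod.eventually_eq_zero_of_unitary
      (ball_mem_nhds 1 hr) fun u hu hur => ?_) ha)
  obtain ⟨k, hk⟩ := hcon u hu
  exact Finset.prod_eq_zero (Finset.mem_univ k) (hk (hball u hur k))

theorem exists_mem_orthogonal_norm_eq_one {E : Type*} [NormedAddCommGroup E]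
    [InnerProductSpace ℂ E] {K : Submodule ℂ E} [FiniteDimensional ℂ K]
    (hK : Module.finrank ℂ K < Module.finrank ℂ E) : ∃ ζ ∈ Kᗮ, ‖ζ‖ = 1 := by
  obtain ⟨x, hx, hx0⟩ := Submodule.exists_mem_ne_zero_of_ne_bot (p := Kᗮ)
    fun h => hK.ne (by rw [K.orthogonal_eq_bot_iff.1 h, finrank_top])
  exact ⟨(‖x‖⁻¹ : ℂ) • x, Kᗮ.smul_mem _ hx, by simpa using norm_smul_inv_norm (𝕜 := ℂ) hx0⟩

theorem CurveHolomorphicOn.eqOn_zero_of_isNull_pair {G : Type*} [NormedAddCommGroup G]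
    [NormedSpace ℂ G] [CompleteSpace G] (hE : 1 < Module.finrank ℂ E) {V : Set E} (hV : IsOpen V)
    (hVc : IsPreconnected V) {p : E} (hp : p ∈ V) (hp1 : ‖p‖ = 1) {h : E × E → G}
    (hh : CurveHolomorphicOn h (V ×ˢ V))
    (h0 : ∀ z ∈ V, ∀ w ∈ V, ‖w‖ = 1 → ⟪w, z⟫_ℂ = 1 → h (z, w) = 0) : EqOn h 0 (V ×ˢ V) := by
  have hpp : ⟪p, p⟫_ℂ = 1 := by simp [inner_self_eq_norm_sq_to_K, hp1]
  obtain ⟨ζ, hζp, hζ⟩ := exists_mem_orthogonal_norm_eq_one (K := ℂ ∙ p)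
    ((finrank_span_singleton (by rintro rfl; simp at hp1)).trans_lt hE)
  rw [Submodule.mem_orthogonal_singleton_iff_inner_right] at hζp
  obtain ⟨ε, hε, hεV⟩ : ∃ ε ∈ ({0}ᶜ : Set ℂ), p + ε • ζ ∈ V := by
    have hc : Tendsto (fun ε : ℂ => p + ε • ζ) (𝓝 0) (𝓝 p) :=
      Continuous.tendsto' (by fun_prop) _ _ (by simp)
    exact (eventually_mem_nhdsWithin.and
      (nhdsWithin_le_nhds (hc.eventually (hV.mem_nhds hp)))).exists
  set e : (E →L[ℂ] E) →L[ℂ] E × E :=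
    (ContinuousLinearMap.apply ℂ E (p + ε • ζ)).prod (ContinuousLinearMap.apply ℂ E p) with he
  have heV : e 1 ∈ V ×ˢ V := ⟨hεV, hp⟩
  have hsurj : Function.Surjective e := fun ⟨x, y⟩ => by
    refine ⟨(innerSL ℂ ζ).smulRight (ε⁻¹ • (x - y)) + (innerSL ℂ p).smulRight y, ?_⟩
    have hpζ : ⟪ζ, p⟫_ℂ = 0 := inner_eq_zero_symm.1 hζp
    simp [he, hζp, hpζ, hp1, hζ, smul_inv_smul₀ (show ε ≠ 0 from hε)]
  refine hh.eqOn_zero_of_eventually_comp (hV.prod hV) (hVc.prod hVc) hsurj heV ?_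
  have hO : e ⁻¹' (V ×ˢ V) ∈ 𝓝 1 := e.continuous.continuousAt ((hV.prod hV).mem_nhds heV)
  refine (hh.comp_differentiableOn e.differentiable.differentiableOn
    (mapsTo_preimage _ _)).eventually_eq_zero_of_unitary hO fun u hu huV =>
    h0 _ huV.1 _ huV.2 ?_ ?_
  · rw [← hp1]
    exact ContinuousLinearMap.norm_map_of_mem_unitary hu p
  · refine (ContinuousLinearMap.inner_map_map_of_mem_unitary hu p (p + ε • ζ)).trans ?_
    rw [inner_add_right, inner_smul_right, hpp, hζp, mul_zero, add_zero]

end UnitaryOrbits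

section DimensionCount

open scoped InnerProductSpace ComplexOrder

variable {H : Type*} [NormedAddCommGroup H] [InnerProductSpace ℂ H]

theorem linearIndependent_prod_of_inner_eq_zero {κ ι : Type*} [Finite κ] [Finite ι]
    {v : κ → ι → H} (hv : ∀ k, LinearIndependent ℂ (v k))
    (h0 : Pairwise fun k l => ∀ i j, ⟪v k i, v l j⟫_ℂ = 0) :
    LinearIndependent ℂ fun x : κ × ι => v x.1 x.2 := by
  cases nonempty_fintype κ
  cases nonempty_fintype ι
  refine Fintype.linearIndependent_iff.2 fun g hg x => ?_
  rw [Fintype.sum_prod_type] at hg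
  refine Fintype.linearIndependent_iff.1 (hv x.1) (fun i => g (x.1, i)) ?_ x.2
  have hself : ⟪∑ i, g (x.1, i) • v x.1 i, ∑ k, ∑ i, g (k, i) • v k i⟫_ℂ =
      ⟪∑ i, g (x.1, i) • v x.1 i, ∑ i, g (x.1, i) • v x.1 i⟫_ℂ := by
    rw [inner_sum]
    refine Finset.sum_eq_single_of_mem x.1 (Finset.mem_univ _) fun k _ hk => ?_
    simp [sum_inner, inner_sum, inner_smul_left, inner_smul_right, h0 hk.symm]
  rwa [hg, inner_zero_right, eq_comm, inner_self_eq_zero] at hself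

theorem linearIndependent_of_det_inner_ne_zero {ι : Type*} [Fintype ι] [DecidableEq ι]
    {c v : ι → H} (h : (Matrix.of fun i j => ⟪c i, v j⟫_ℂ).det ≠ 0) : LinearIndependent ℂ v := by
  refine Fintype.linearIndependent_iff.2 fun g hg i => ?_
  refine congrFun (Matrix.eq_zero_of_mulVec_eq_zero h (v := g) (funext fun j => ?_)) i
  simpa [Matrix.mulVec, dotProduct, inner_sum, inner_smul_right, mul_comm] using
    congrArg (fun x => ⟪c j, x⟫_ℂ) hg

theorem card_mul_finrank_le_of_inner_eq_zero {T ι : Type*} [NormedAddCommGroup T]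
    [InnerProductSpace ℂ T] [FiniteDimensional ℂ T] [FiniteDimensional ℂ H] [Fintype ι]
    {Ω : Set T} (hΩ : IsOpen Ω) (hΩc : IsPreconnected Ω) (hΩ0 : 0 ∈ Ω) {Γ : ι → T → H}
    (hΓ : ∀ i, DifferentiableOn ℂ (Γ i) Ω)
    (horth : ∀ i j, ∀ ζ ∈ Ω, ∀ ω ∈ Ω, ⟪ζ, ω⟫_ℂ = 0 → ⟪Γ i ζ, Γ j ω⟫_ℂ = 0)
    {K : Submodule ℂ H} (hK : ∀ i, ∀ ζ ∈ Ω, Γ i ζ ∈ K) {ζ : T} (hζ : ζ ∈ Ω)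
    (hli : LinearIndependent ℂ fun i => Γ i ζ) :
    Module.finrank ℂ T * Fintype.card ι ≤ Module.finrank ℂ K := by
  classical
  set D : T → ℂ := fun ω => (Matrix.of fun i j => ⟪Γ i ζ, Γ j ω⟫_ℂ).det
  have hDζ : D ζ ≠ 0 := (Matrix.posDef_gram_iff_linearIndependent.2 hli).det_pos.ne'
  have hDd : CurveHolomorphicOn D Ω := CurveHolomorphicOn.matrix_det fun i j =>
    .of_differentiableOn ((innerSL ℂ (Γ i ζ)).differentiable.comp_differentiableOn (hΓ j))
  obtain ⟨ε, hε, hball⟩ := Metric.isOpen_iff.1 hΩ 0 hΩ0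
  set b := stdOrthonormalBasis ℂ T
  set v : Fin (Module.finrank ℂ T) → T := fun k => ((ε / 2 : ℝ) : ℂ) • b k with hv
  have hvΩ (k) : v k ∈ Ω := hball <| by
    simpa [hv, norm_smul, abs_of_pos hε] using half_lt_self hε
  obtain ⟨u, hu, huv⟩ := exists_unitary_forall_ne_zero hΩ hΩc hDd ⟨ζ, hζ, hDζ⟩ hvΩ
    fun k => smul_ne_zero (by simpa using hε.ne') (b.orthonormal.ne_zero k)
  have hind := linearIndependent_prod_of_inner_eq_zero (v := fun k i => Γ i (u (v k)))
    (fun k => linearIndependent_of_det_inner_ne_zero (huv k).2) fun k l hkl i j =>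
      horth i j _ (huv k).1 _ (huv l).1 <| by
        rw [ContinuousLinearMap.inner_map_map_of_mem_unitary hu, inner_smul_left,
          inner_smul_right, b.orthonormal.2 hkl, mul_zero, mul_zero]
  have hspan := Submodule.finrank_mono (Submodule.span_le.2
    (Set.range_subset_iff.2 fun x : Fin (Module.finrank ℂ T) × ι => hK x.2 _ (huv x.1).1))
  simpa [finrank_span_eq_card hind] using hspan

end DimensionCount

section LocalOrthogonalMaps

open Set Filter Topology Metric
open scoped InnerProductSpace

variable {E A G : Type*} [NormedAddCommGroup E] [InnerProductSpace ℂ E]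
  [NormedAddCommGroup A] [InnerProductSpace ℂ A] [NormedAddCommGroup G] [InnerProductSpace ℂ G]
  {F : E → A →L[ℂ] G} {V : Set E}

/-- A local orthogonal map in coordinate-free form. The rows of a chart point of `𝒢(r',s')` are
encoded as the images of an orthonormal basis of `A`, so that `F z` has the transposed chart
matrix; orthogonality of `z` and `w` reads `⟪w, z⟫ = 1` because Mathlib's inner product is
conjugate-linear in the first argument. -/
structure IsLocalOrthogonal (F : E → A →L[ℂ] G) (V : Set E) : Prop where
  differentiableOn : DifferentiableOn ℂ F V
  inner_eq : ∀ z ∈ V, ∀ w ∈ V, ⟪w, z⟫_ℂ = 1 → ∀ β γ, ⟪F w β, F z γ⟫_ℂ = ⟪β, γ⟫_ℂ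

theorem inner_mul_inner_comm_of_not_linearIndependent {H : Type*} [NormedAddCommGroup H]
    [InnerProductSpace ℂ H] {x y : H} (h : ¬ LinearIndependent ℂ ![x, y]) (c d : H) :
    ⟪c, x⟫_ℂ * ⟪d, y⟫_ℂ = ⟪d, x⟫_ℂ * ⟪c, y⟫_ℂ := by
  rw [LinearIndependent.pair_iff] at h
  push Not at h
  obtain ⟨a, b, hab, hne⟩ := h
  have hc := congrArg (fun v => ⟪c, v⟫_ℂ) hab
  have hd := congrArg (fun v => ⟪d, v⟫_ℂ) hab
  simp only [inner_add_right, inner_smul_right, inner_zero_right] at hc hd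
  by_cases ha : a = 0
  · refine mul_left_cancel₀ (hne ha) ?_
    linear_combination ⟪c, x⟫_ℂ * hd - ⟪d, x⟫_ℂ * hc
  · refine mul_left_cancel₀ ha ?_
    linear_combination ⟪d, y⟫_ℂ * hc - ⟪c, y⟫_ℂ * hd

namespace IsLocalOrthogonal

theorem mono {W : Set E} (hF : IsLocalOrthogonal F V) (hW : W ⊆ V) : IsLocalOrthogonal F W :=
  ⟨hF.differentiableOn.mono hW, fun z hz w hw => hF.inner_eq z (hW hz) w (hW hw)⟩

theorem differentiableOn_apply (hF : IsLocalOrthogonal F V) (β : A) :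
    DifferentiableOn ℂ (fun z => F z β) V :=
  (ContinuousLinearMap.apply ℂ G β).differentiable.comp_differentiableOn hF.differentiableOn

theorem inner_self_eq (hF : IsLocalOrthogonal F V) {w : E} (hw : w ∈ V) (hw1 : ‖w‖ = 1)
    (β γ : A) : ⟪F w β, F w γ⟫_ℂ = ⟪β, γ⟫_ℂ :=
  hF.inner_eq w hw w hw (by simp [inner_self_eq_norm_sq_to_K, hw1]) β γ

theorem sub_mem_orthogonal_range (hF : IsLocalOrthogonal F V) {z w : E} (hz : z ∈ V) (hw : w ∈ V)
    (hw1 : ‖w‖ = 1) (hwz : ⟪w, z⟫_ℂ = 1) (γ : A) :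
    F z γ - F w γ ∈ (F w : A →ₗ[ℂ] G).rangeᗮ := by
  rintro _ ⟨β, rfl⟩
  simp [inner_sub_right, hF.inner_eq z hz w hw hwz, hF.inner_self_eq hw hw1]

theorem inner_sub_sub_eq_zero (hF : IsLocalOrthogonal F V) {z x w : E} (hz : z ∈ V) (hx : x ∈ V)
    (hw : w ∈ V) (hw1 : ‖w‖ = 1) (hxw : ⟪x, w⟫_ℂ = 1) (hwz : ⟪w, z⟫_ℂ = 1)
    (hxz : ⟪x, z⟫_ℂ = 1) (β γ : A) : ⟪F x β - F w β, F z γ - F w γ⟫_ℂ = 0 := by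
  simp [hF.inner_eq z hz x hx hxz, hF.inner_eq w hw x hx hxw,
    hF.inner_eq z hz w hw hwz, hF.inner_self_eq hw hw1]

variable [FiniteDimensional ℂ G]

theorem finrank_orthogonal_range (hF : IsLocalOrthogonal F V) {w : E} (hw : w ∈ V)
    (hw1 : ‖w‖ = 1) :
    Module.finrank ℂ A + Module.finrank ℂ (F w : A →ₗ[ℂ] G).rangeᗮ = Module.finrank ℂ G := by
  have hinj : Function.Injective (F w : A →ₗ[ℂ] G) := by
    refine (injective_iff_map_eq_zero _).2 fun β hβ => ?_
    rw [← inner_self_eq_zero (𝕜 := ℂ), ← hF.inner_self_eq hw hw1]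
    simpa using hβ
  rw [← LinearMap.finrank_range_of_inj hinj, Submodule.finrank_add_finrank_orthogonal]

variable [FiniteDimensional ℂ E]

theorem not_linearIndependent_sub (hF : IsLocalOrthogonal F V) (hV : IsOpen V)
    (hVc : Convex ℝ V)
    (hdim : Module.finrank ℂ G + 2 < 2 * Module.finrank ℂ E + Module.finrank ℂ A) {w ζ : E}
    (hw : w ∈ V) (hw1 : ‖w‖ = 1) (hζ : ⟪w, ζ⟫_ℂ = 0) (a : Fin 2 → ℂ)
    (ha : ∀ i, w + a i • ζ ∈ V) (η : Fin 2 → A) :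
    ¬ LinearIndependent ℂ fun i => F (w + a i • ζ) (η i) - F w (η i) := by
  intro hli
  have hwT (x : (ℂ ∙ w)ᗮ) : ⟪w, (x : E)⟫_ℂ = 0 :=
    Submodule.mem_orthogonal_singleton_iff_inner_right.1 x.2
  have hg (i) : Differentiable ℂ fun x : (ℂ ∙ w)ᗮ => w + a i • (x : E) :=
    ((ℂ ∙ w)ᗮ.subtypeL.differentiable.const_smul (a i)).const_add w
  have hgg (i j) {x y : (ℂ ∙ w)ᗮ} (hxy : ⟪x, y⟫_ℂ = 0) :
      ⟪w + a i • (x : E), w + a j • (y : E)⟫_ℂ = 1 := by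
    have hxw : ⟪(x : E), w⟫_ℂ = 0 := inner_eq_zero_symm.1 (hwT x)
    have hxy' : ⟪(x : E), (y : E)⟫_ℂ = 0 := hxy
    simp [hw1, hwT, hxw, hxy']
  set Ω : Set (ℂ ∙ w)ᗮ := ⋂ i, (fun x : (ℂ ∙ w)ᗮ => w + a i • (x : E)) ⁻¹' V with hΩ
  have hΩV {i} {x : (ℂ ∙ w)ᗮ} (hx : x ∈ Ω) : w + a i • (x : E) ∈ V := mem_iInter.1 hx i
  have hΩo : IsOpen Ω := isOpen_iInter_of_finite fun i => hV.preimage (hg i).continuous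
  have hΩc : Convex ℝ Ω := convex_iInter fun i => (hVc.translate_preimage_right w).linear_preimage
    ((a i • (ℂ ∙ w)ᗮ.subtype).restrictScalars ℝ)
  have hcount := card_mul_finrank_le_of_inner_eq_zero hΩo hΩc.isPreconnected
    (by simp [hΩ, hw]) (Γ := fun i (x : (ℂ ∙ w)ᗮ) => F (w + a i • (x : E)) (η i) - F w (η i))
    (fun i => ((hF.differentiableOn_apply (η i)).comp (hg i).differentiableOn
      fun x hx => hΩV hx).sub_const _)
    (fun i j x hx y hy hxy => ?_) (K := (F w : A →ₗ[ℂ] G).rangeᗮ) (fun i x hx => ?_)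
    (ζ := ⟨ζ, Submodule.mem_orthogonal_singleton_iff_inner_right.2 hζ⟩) (mem_iInter.2 ha) hli
  · have := hF.finrank_orthogonal_range hw hw1
    have := (ℂ ∙ w).finrank_add_finrank_orthogonal
    rw [finrank_span_singleton (by rintro rfl; simp at hw1)] at this
    rw [Fintype.card_fin] at hcount
    omega
  · exact hF.inner_sub_sub_eq_zero (hΩV hy) (hΩV hx) hw hw1
      (by simpa using hgg i j (inner_zero_right (𝕜 := ℂ) x))
      (by simpa using hgg i j (inner_zero_left (𝕜 := ℂ) y)) (hgg i j hxy) _ _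
  · exact hF.sub_mem_orthogonal_range (hΩV hx) hw hw1
      (by simpa using hgg 0 i (inner_zero_left (𝕜 := ℂ) x)) _

end IsLocalOrthogonal

end LocalOrthogonalMaps

section RankOne

open Set Filter Topology Metric
open scoped InnerProductSpace

variable {E A G : Type*} [NormedAddCommGroup E] [InnerProductSpace ℂ E] [NormedAddCommGroup A]
  [InnerProductSpace ℂ A] [NormedAddCommGroup G] [InnerProductSpace ℂ G]
  {F : E → A →L[ℂ] G} {V : Set E}

theorem exists_unit_forall_inner_eq_zero_imp_apply_eq_zero [CompleteSpace A] [CompleteSpace G]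
    {D : A →L[ℂ] G} (hD : D ≠ 0)
    (h : ∀ β γ c d, ⟪c, D β⟫_ℂ * ⟪d, D γ⟫_ℂ = ⟪d, D β⟫_ℂ * ⟪c, D γ⟫_ℂ) :
    ∃ α : A, ‖α‖ = 1 ∧ ∀ β, ⟪α, β⟫_ℂ = 0 → D β = 0 := by
  obtain ⟨δ, hδ⟩ : ∃ δ, D δ ≠ 0 := by
    by_contra! hcon
    exact hD (ContinuousLinearMap.ext hcon)
  set α := D.adjoint (D δ)
  have hα : α ≠ 0 := fun hα => hδ <| by
    rw [← inner_self_eq_zero (𝕜 := ℂ), ← D.adjoint_inner_left]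
    exact (congrArg (fun x => ⟪x, δ⟫_ℂ) hα).trans (inner_zero_left δ)
  refine ⟨(‖α‖⁻¹ : ℂ) • α, by simpa using norm_smul_inv_norm (𝕜 := ℂ) hα, fun β hβ => ?_⟩
  have hβ' : ⟪D δ, D β⟫_ℂ = 0 := by
    rw [← D.adjoint_inner_left]
    simpa [inner_smul_left, hα] using hβ
  refine ext_inner_left ℂ fun c => mul_right_cancel₀ (inner_self_ne_zero (𝕜 := ℂ).2 hδ) ?_
  rw [h β δ c (D δ), hβ', inner_zero_right, zero_mul, zero_mul]

namespace IsLocalOrthogonal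

theorem differentiableOn_sub_prod (hF : IsLocalOrthogonal F V) :
    DifferentiableOn ℂ (fun q : E × E => F q.1 - F q.2) (V ×ˢ V) :=
  (hF.differentiableOn.comp differentiableOn_fst fun _ hq => hq.1).sub
    (hF.differentiableOn.comp differentiableOn_snd fun _ hq => hq.2)

theorem eq_of_sub_mem_orthogonal_range (hF : IsLocalOrthogonal F V) {p w : E} (hp : p ∈ V)
    (hp1 : ‖p‖ = 1) (hw : w ∈ V) (hw1 : ‖w‖ = 1)
    (h : ∀ γ, (F w - F p) γ ∈ (F p : A →ₗ[ℂ] G).rangeᗮ) : F w = F p := by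
  refine ContinuousLinearMap.ext fun γ => sub_eq_zero.1 (inner_self_eq_zero (𝕜 := ℂ).1 ?_)
  have hpw : ⟪F p γ, F w γ⟫_ℂ = ⟪γ, γ⟫_ℂ := by
    rw [← hF.inner_self_eq hp hp1, ← sub_eq_zero, ← inner_sub_right]
    exact h γ (F p γ) ⟨γ, rfl⟩
  have hwp : ⟪F w γ, F p γ⟫_ℂ = ⟪γ, γ⟫_ℂ := by
    rw [← inner_conj_symm, hpw, inner_conj_symm]
  rw [inner_sub_left, inner_sub_right, inner_sub_right, hpw, hwp, hF.inner_self_eq hp hp1,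
    hF.inner_self_eq hw hw1]
  ring

theorem one_lt_finrank [FiniteDimensional ℂ G] (hF : IsLocalOrthogonal F V)
    (hdim : Module.finrank ℂ G + 2 < 2 * Module.finrank ℂ E + Module.finrank ℂ A) {p : E}
    (hp : p ∈ V) (hp1 : ‖p‖ = 1) : 1 < Module.finrank ℂ E := by
  have := hF.finrank_orthogonal_range hp hp1
  omega

variable [FiniteDimensional ℂ E] [FiniteDimensional ℂ G]

theorem inner_sub_mul_inner_sub_comm_of_isNull (hF : IsLocalOrthogonal F V) (hV : IsOpen V)
    (hVc : Convex ℝ V)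
    (hdim : Module.finrank ℂ G + 2 < 2 * Module.finrank ℂ E + Module.finrank ℂ A) (β γ : A)
    (c d : G) {z w : E} (hz : z ∈ V) (hw : w ∈ V) (hw1 : ‖w‖ = 1) (hwz : ⟪w, z⟫_ℂ = 1) :
    ⟪c, (F z - F w) β⟫_ℂ * ⟪d, (F z - F w) γ⟫_ℂ =
      ⟪d, (F z - F w) β⟫_ℂ * ⟪c, (F z - F w) γ⟫_ℂ := by
  have hζ : ⟪w, z - w⟫_ℂ = 0 := by simp [hwz, hw1]
  refine inner_mul_inner_comm_of_not_linearIndependent (fun hli => ?_) c d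
  have hpair : (fun i => F (w + (1 : Fin 2 → ℂ) i • (z - w)) (![β, γ] i) - F w (![β, γ] i)) =
      ![(F z - F w) β, (F z - F w) γ] := by
    ext i
    fin_cases i <;> simp
  exact hF.not_linearIndependent_sub hV hVc hdim hw hw1 hζ 1 (by simp [hz]) ![β, γ] (hpair ▸ hli)

theorem inner_sub_mul_inner_sub_comm (hF : IsLocalOrthogonal F V) (hV : IsOpen V)
    (hVc : Convex ℝ V)
    (hdim : Module.finrank ℂ G + 2 < 2 * Module.finrank ℂ E + Module.finrank ℂ A) {p : E}
    (hp : p ∈ V) (hp1 : ‖p‖ = 1) (β γ : A) (c d : G) {z w : E} (hz : z ∈ V) (hw : w ∈ V) :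
    ⟪c, (F z - F w) β⟫_ℂ * ⟪d, (F z - F w) γ⟫_ℂ =
      ⟪d, (F z - F w) β⟫_ℂ * ⟪c, (F z - F w) γ⟫_ℂ := by
  have hd (x : G) (η : A) :
      DifferentiableOn ℂ (fun q : E × E => ⟪x, (F q.1 - F q.2) η⟫_ℂ) (V ×ˢ V) :=
    ((innerSL ℂ x).comp (ContinuousLinearMap.apply ℂ G η)).differentiable.comp_differentiableOn
      hF.differentiableOn_sub_prod
  have hzero := (CurveHolomorphicOn.of_differentiableOn (((hd c β).fun_mul (hd d γ)).fun_sub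
    ((hd d β).fun_mul (hd c γ)))).eqOn_zero_of_isNull_pair (hF.one_lt_finrank hdim hp hp1) hV
    hVc.isPreconnected hp hp1 fun z hz w hw hw1 hwz => sub_eq_zero.2
      (hF.inner_sub_mul_inner_sub_comm_of_isNull hV hVc hdim β γ c d hz hw hw1 hwz)
  simpa only [Pi.zero_apply, sub_eq_zero] using hzero (mk_mem_prod hz hw)

theorem exists_isNull_apply_ne (hF : IsLocalOrthogonal F V) (hV : IsOpen V)
    (hVc : IsPreconnected V) (hE : 1 < Module.finrank ℂ E) {p : E} (hp : p ∈ V) (hp1 : ‖p‖ = 1)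
    (hne : ∃ z ∈ V, ∃ w ∈ V, F z ≠ F w) :
    ∃ w ∈ V, ‖w‖ = 1 ∧ ∃ z ∈ V, ⟪w, z⟫_ℂ = 1 ∧ F z ≠ F w := by
  by_contra! hcon
  obtain ⟨z, hz, w, hw, hzw⟩ := hne
  have hh := CurveHolomorphicOn.of_differentiableOn hF.differentiableOn_sub_prod
  exact hzw (sub_eq_zero.1 (hh.eqOn_zero_of_isNull_pair hE hV hVc hp hp1
    (fun z hz w hw hw1 hwz => sub_eq_zero.2 (hcon w hw hw1 z hz hwz))
    (mk_mem_prod hz hw)))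

theorem exists_isNull_ne (hF : IsLocalOrthogonal F V) (hV : IsOpen V)
    (hVc : IsPreconnected V) (hE : 1 < Module.finrank ℂ E) {p : E} (hp : p ∈ V) (hp1 : ‖p‖ = 1)
    {z : E} (hz : z ∈ V) (hzp : F z ≠ F p) : ∃ w ∈ V, ‖w‖ = 1 ∧ F w ≠ F p := by
  by_contra! hcon
  have hd : DifferentiableOn ℂ (fun q : E × E => F q.2 - F p) (V ×ˢ V) :=
    (hF.differentiableOn.comp differentiableOn_snd fun q hq => hq.2).sub_const _
  have hh := CurveHolomorphicOn.of_differentiableOn hd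
  exact hzp (sub_eq_zero.1 (hh.eqOn_zero_of_isNull_pair hE hV hVc hp hp1
    (fun _ _ w hw hw1 _ => sub_eq_zero.2 (hcon w hw hw1)) (mk_mem_prod hz hz)))

theorem apply_eq_or_inner_sub_eq_zero (hF : IsLocalOrthogonal F V) (hV : IsOpen V)
    (hVc : Convex ℝ V)
    (hdim : Module.finrank ℂ G + 2 < 2 * Module.finrank ℂ E + Module.finrank ℂ A) {p x : E}
    (hp : p ∈ V) (hp1 : ‖p‖ = 1) (hx : x ∈ V) {δ : A} (hδ : (F x - F p) δ ≠ 0) :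
    (∀ β, (F x - F p) β = 0 → ∀ z ∈ V, (F z - F p) β = 0) ∨
      ∀ γ d, ⟪d, (F x - F p) δ⟫_ℂ = 0 → ∀ z ∈ V, ⟪d, (F z - F p) γ⟫_ℂ = 0 := by
  have hminor := hF.inner_sub_mul_inner_sub_comm hV hVc hdim hp hp1
  have hker {β d} (hβ : (F x - F p) β = 0) (hd : ⟪d, (F x - F p) δ⟫_ℂ = 0) {z} (hz : z ∈ V) :
      ⟪d, (F z - F p) β⟫_ℂ = 0 := by
    have hsub (η : A) : (F z - F x) η = (F z - F p) η - (F x - F p) η := by simp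
    have hzp := hminor β δ ((F x - F p) δ) d hz hp
    have hzx := hminor β δ ((F x - F p) δ) d hz hx
    simp only [hsub, hβ, sub_zero, inner_sub_right, hd] at hzx
    refine (mul_eq_zero.1 ?_).resolve_right (inner_self_ne_zero (𝕜 := ℂ).2 hδ)
    linear_combination hzx - hzp
  refine or_iff_not_imp_left.2 fun hcon γ d hd z hz => ?_
  push Not at hcon
  obtain ⟨β, hβ, y, hy, hyβ⟩ := hcon
  have hdiff (c : A) : DifferentiableOn ℂ (fun z => (F z - F p) c) V :=
    (hF.differentiableOn_apply c).sub_const (F p c)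
  refine CurveHolomorphicOn.eqOn_zero_of_smul_eq_zero hV hVc
    (.of_differentiableOn ((innerSL ℂ d).differentiable.comp_differentiableOn (hdiff γ)))
    (.of_differentiableOn (hdiff β)) (fun z hz => ?_) hy hyβ hz
  refine ext_inner_left ℂ fun c => ?_
  have := hminor β γ c d hz hp
  rw [hker hβ hd hz, zero_mul] at this
  rw [inner_smul_right, inner_zero_right, mul_comm]
  exact this

theorem exists_unit_forall_apply_eq [CompleteSpace A] (hF : IsLocalOrthogonal F V) (hV : IsOpen V)
    (hVc : Convex ℝ V)
    (hdim : Module.finrank ℂ G + 2 < 2 * Module.finrank ℂ E + Module.finrank ℂ A)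
    (hnull : ∃ p ∈ V, ‖p‖ = 1) (hne : ∃ z ∈ V, ∃ w ∈ V, F z ≠ F w) :
    ∃ α : A, ‖α‖ = 1 ∧ ∀ β, ⟪α, β⟫_ℂ = 0 → ∀ z ∈ V, ∀ w ∈ V, F z β = F w β := by
  obtain ⟨q, hq, hq1⟩ := hnull
  have hE := hF.one_lt_finrank hdim hq hq1
  obtain ⟨p, hp, hp1, x, hx, hpx, hxp⟩ :=
    hF.exists_isNull_apply_ne hV hVc.isPreconnected hE hq hq1 hne
  obtain ⟨α, hα, hker⟩ := exists_unit_forall_inner_eq_zero_imp_apply_eq_zero (sub_ne_zero.2 hxp)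
    fun β γ c d => hF.inner_sub_mul_inner_sub_comm hV hVc hdim hp hp1 β γ c d hx hp
  obtain ⟨δ, hδ⟩ : ∃ δ, (F x - F p) δ ≠ 0 := by
    by_contra! hcon
    exact hxp (sub_eq_zero.1 (ContinuousLinearMap.ext hcon))
  obtain ⟨w, hw, hw1, hwp⟩ := hF.exists_isNull_ne hV hVc.isPreconnected hE hp hp1 hx hxp
  rcases hF.apply_eq_or_inner_sub_eq_zero hV hVc hdim hp hp1 hx hδ with hconst | hrange
  · have h0 {β} (hβ : ⟪α, β⟫_ℂ = 0) {z} (hz : z ∈ V) : F z β = F p β :=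
      sub_eq_zero.1 (hconst β (hker β hβ) z hz)
    exact ⟨α, hα, fun β hβ z hz w hw => (h0 hβ hz).trans (h0 hβ hw).symm⟩
  · exact absurd (hF.eq_of_sub_mem_orthogonal_range hp hp1 hw hw1 fun γ d hd => hrange γ d
      (hF.sub_mem_orthogonal_range hx hp hp1 hpx δ d hd) w hw) hwp

end IsLocalOrthogonal

end RankOne

section NullLines

open Set Filter Topology Metric
open scoped InnerProductSpace

variable {E G : Type*} [NormedAddCommGroup E] [InnerProductSpace ℂ E] [NormedAddCommGroup G]
  [InnerProductSpace ℂ G] {f : E → G} {V : Set E}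

/-- A local orthogonal map between two spaces of type `𝒢(1,·)` that sends the points of each
null line, a complex line tangent to the unit sphere, to points of a line. -/
structure IsNullLinePreserving (f : E → G) (V : Set E) : Prop where
  differentiableOn : DifferentiableOn ℂ f V
  inner_eq_one : ∀ z ∈ V, ∀ w ∈ V, ⟪w, z⟫_ℂ = 1 → ⟪f w, f z⟫_ℂ = 1
  not_linearIndependent : ∀ w ∈ V, ‖w‖ = 1 → ∀ ζ, ⟪w, ζ⟫_ℂ = 0 → ∀ a b : ℂ, w + a • ζ ∈ V →
    w + b • ζ ∈ V → ¬ LinearIndependent ℂ ![f (w + a • ζ) - f w, f (w + b • ζ) - f w]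

theorem eventually_add_smul_mem (hV : IsOpen V) {p : E} (hp : p ∈ V) (d : E) :
    ∀ᶠ t : ℂ in 𝓝 0, p + t • d ∈ V :=
  (Continuous.tendsto' (by fun_prop) _ _ (by simp) : Tendsto (fun t : ℂ => p + t • d) (𝓝 0)
    (𝓝 p)).eventually (hV.mem_nhds hp)

namespace IsNullLinePreserving

theorem hasDerivAt_add_smul (hf : IsNullLinePreserving f V) (hV : IsOpen V) {p : E} (hp : p ∈ V)
    (d : E) : HasDerivAt (fun t : ℂ => f (p + t • d)) (fderiv ℂ f p d) 0 :=
  (hf.differentiableOn.differentiableAt (hV.mem_nhds hp)).hasFDerivAt.hasLineDerivAt d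

theorem hasDerivAt_inner_add_smul (hf : IsNullLinePreserving f V) (hV : IsOpen V) {p : E}
    (hp : p ∈ V) (c : G) (d : E) :
    HasDerivAt (fun t : ℂ => ⟪c, f (p + t • d)⟫_ℂ) ⟪c, fderiv ℂ f p d⟫_ℂ 0 :=
  (innerSL ℂ c).hasFDerivAt.comp_hasDerivAt 0 (hf.hasDerivAt_add_smul hV hp d)

theorem inner_fderiv_apply (hf : IsNullLinePreserving f V) (hV : IsOpen V) {p z : E}
    (hp : p ∈ V) (hz : z ∈ V) (hzp : ⟪z, p⟫_ℂ = 1) (d : E) :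
    ⟪f z, fderiv ℂ f p d⟫_ℂ = ⟪z, d⟫_ℂ * ⟪f z, fderiv ℂ f p p⟫_ℂ := by
  have hperp {d : E} (hd : ⟪z, d⟫_ℂ = 0) : ⟪f z, fderiv ℂ f p d⟫_ℂ = 0 := by
    refine (hf.hasDerivAt_inner_add_smul hV hp (f z) d).unique
      ((hasDerivAt_const (0 : ℂ) (1 : ℂ)).congr_of_eventuallyEq ?_)
    filter_upwards [eventually_add_smul_mem hV hp d] with t ht
    exact hf.inner_eq_one _ ht _ hz (by simp [hzp, hd])
  have h := hperp (d := d - ⟪z, d⟫_ℂ • p) (by simp [hzp])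
  rwa [map_sub, map_smul, inner_sub_right, inner_smul_right, sub_eq_zero] at h

theorem exists_sub_eq_smul_fderiv (hf : IsNullLinePreserving f V) (hV : IsOpen V) {p ζ : E}
    (hp : p ∈ V) (hp1 : ‖p‖ = 1) (hζ : ⟪p, ζ⟫_ℂ = 0) {τ : ℂ} (hτ : p + τ • ζ ∈ V)
    (hb0 : fderiv ℂ f p ζ ≠ 0) : ∃ μ : ℂ, f (p + τ • ζ) - f p = μ • fderiv ℂ f p ζ := by
  set b := fderiv ℂ f p ζ
  set x := f (p + τ • ζ) - f p
  have hderiv (c : G) : HasDerivAt (fun t : ℂ => ⟪c, f (p + t • ζ) - f p⟫_ℂ) ⟪c, b⟫_ℂ 0 := by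
    simpa only [inner_sub_right] using
      (hf.hasDerivAt_inner_add_smul hV hp c ζ).sub_const ⟪c, f p⟫_ℂ
  refine ⟨⟪b, x⟫_ℂ / ⟪b, b⟫_ℂ, ext_inner_left ℂ fun c => ?_⟩
  have hminor : ⟪c, x⟫_ℂ * ⟪b, b⟫_ℂ = ⟪b, x⟫_ℂ * ⟪c, b⟫_ℂ := by
    refine ((hderiv b).const_mul ⟪c, x⟫_ℂ).unique
      (((hderiv c).const_mul ⟪b, x⟫_ℂ).congr_of_eventuallyEq ?_)
    filter_upwards [eventually_add_smul_mem hV hp ζ] with t ht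
    exact inner_mul_inner_comm_of_not_linearIndependent
      (hf.not_linearIndependent p hp hp1 ζ hζ τ t hτ ht) c b
  rw [inner_smul_right, div_mul_eq_mul_div, eq_div_iff (inner_self_ne_zero.2 hb0), hminor]

theorem inner_sub_eq_mul_inner (hf : IsNullLinePreserving f V) (hV : IsOpen V) {p ζ : E}
    (hp : p ∈ V) (hp1 : ‖p‖ = 1) (hζ : ⟪p, ζ⟫_ℂ = 0) {τ : ℂ} (hτ : p + τ • ζ ∈ V) :
    ⟪fderiv ℂ f p ζ, f (p + τ • ζ) - f p⟫_ℂ =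
      τ * ⟪ζ, ζ⟫_ℂ * ⟪fderiv ℂ f p p, f (p + τ • ζ)⟫_ℂ := by
  have hpp : ⟪p, p⟫_ℂ = 1 := by rw [inner_self_eq_norm_sq_to_K, hp1]; simp
  have hζp : ⟪ζ, p⟫_ℂ = 0 := inner_eq_zero_symm.1 hζ
  have hfp : ⟪fderiv ℂ f p ζ, f p⟫_ℂ = 0 := by
    rw [inner_eq_zero_symm, hf.inner_fderiv_apply hV hp hp hpp, hζ, zero_mul]
  have h := congrArg (starRingEnd ℂ) (hf.inner_fderiv_apply hV hp hτ
    (by rw [inner_add_left, inner_smul_left, hpp, hζp, mul_zero, add_zero]) ζ)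
  rw [map_mul, inner_conj_symm, inner_conj_symm, inner_conj_symm, inner_add_right, hζp, zero_add,
    inner_smul_right] at h
  rw [inner_sub_right, hfp, sub_zero, h]

theorem inner_fderiv_fderiv (hf : IsNullLinePreserving f V) (hV : IsOpen V) {p ζ : E}
    (hp : p ∈ V) (hp1 : ‖p‖ = 1) (hζ : ⟪p, ζ⟫_ℂ = 0) :
    ⟪fderiv ℂ f p ζ, fderiv ℂ f p ζ⟫_ℂ = ⟪ζ, ζ⟫_ℂ * ⟪fderiv ℂ f p p, f p⟫_ℂ := by
  have hleft := (hf.hasDerivAt_inner_add_smul hV hp (fderiv ℂ f p ζ) ζ).sub_const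
    ⟪fderiv ℂ f p ζ, f p⟫_ℂ
  have hright := ((hasDerivAt_id (0 : ℂ)).mul_const ⟪ζ, ζ⟫_ℂ).fun_mul
    (hf.hasDerivAt_inner_add_smul hV hp (fderiv ℂ f p p) ζ)
  have h := hleft.unique <| hright.congr_of_eventuallyEq <| by
    filter_upwards [eventually_add_smul_mem hV hp ζ] with t ht
    rw [← inner_sub_right, hf.inner_sub_eq_mul_inner hV hp hp1 hζ ht, id_eq]
  simpa using h

-- On a null line `f` is the projective transformation `τ ↦ τ / (1 - κ τ)`.
theorem exists_forall_eq_add_smul (hf : IsNullLinePreserving f V) (hV : IsOpen V) {p ζ : E}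
    (hp : p ∈ V) (hp1 : ‖p‖ = 1) (hζ : ⟪p, ζ⟫_ℂ = 0) (hb0 : fderiv ℂ f p ζ ≠ 0) :
    ∃ κ : ℂ, ∀ τ : ℂ, p + τ • ζ ∈ V →
      ∃ μ, (1 - κ * τ) * μ = τ ∧ f (p + τ • ζ) = f p + μ • fderiv ℂ f p ζ := by
  have hbb : ⟪fderiv ℂ f p ζ, fderiv ℂ f p ζ⟫_ℂ ≠ 0 := inner_self_ne_zero.2 hb0
  refine ⟨⟪ζ, ζ⟫_ℂ * ⟪fderiv ℂ f p p, fderiv ℂ f p ζ⟫_ℂ / ⟪fderiv ℂ f p ζ, fderiv ℂ f p ζ⟫_ℂ,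
    fun τ hτ => ?_⟩
  obtain ⟨μ, hμ⟩ := hf.exists_sub_eq_smul_fderiv hV hp hp1 hζ hτ hb0
  refine ⟨μ, ?_, by rw [← hμ, add_sub_cancel]⟩
  have hnorm := hf.inner_fderiv_fderiv hV hp hp1 hζ
  have h := hf.inner_sub_eq_mul_inner hV hp hp1 hζ hτ
  rw [sub_eq_iff_eq_add'.1 hμ, add_sub_cancel_left, inner_smul_right, inner_add_right,
    inner_smul_right] at h
  field_simp
  linear_combination h - τ * hnorm

end IsNullLinePreserving

end NullLines

section NullLineRigidity

open Set Filter Topology Metric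
open scoped InnerProductSpace

variable {E G : Type*} [NormedAddCommGroup E] [InnerProductSpace ℂ E] [NormedAddCommGroup G]
  [InnerProductSpace ℂ G] {f : E → G} {V : Set E}

theorem conj_inner_sub_one {H : Type*} [NormedAddCommGroup H] [InnerProductSpace ℂ H] (x y : H) :
    (starRingEnd ℂ) (⟪x, y⟫_ℂ - 1) = ⟪y, x⟫_ℂ - 1 := by
  rw [map_sub, map_one, inner_conj_symm]

theorem exists_inner_self_sub_one_eq_mul {H K : Type*} [NormedAddCommGroup H]
    [InnerProductSpace ℂ H] [NormedAddCommGroup K] [InnerProductSpace ℂ K] {x : H} {y : K}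
    (hx : 1 < ‖x‖) (hy : 1 < ‖y‖) :
    ∃ c : ℝ, c ≠ 0 ∧ ⟪x, x⟫_ℂ - 1 = c ^ 2 * (⟪y, y⟫_ℂ - 1) := by
  have hsq {r : ℝ} (hr : 1 < r) : 0 < r ^ 2 - 1 := by nlinarith
  have hpos := div_pos (hsq hx) (hsq hy)
  refine ⟨√((‖x‖ ^ 2 - 1) / (‖y‖ ^ 2 - 1)), Real.sqrt_ne_zero'.2 hpos, ?_⟩
  rw [← Complex.ofReal_pow, Real.sq_sqrt hpos.le, inner_self_eq_norm_sq_to_K,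
    inner_self_eq_norm_sq_to_K]
  have := (hsq hy).ne'
  norm_cast
  simp only [Complex.coe_algebraMap]
  norm_cast
  field_simp

namespace IsNullLinePreserving

theorem differentiableOn_inner (hf : IsNullLinePreserving f V) (c : G) :
    DifferentiableOn ℂ (fun w => ⟪c, f w⟫_ℂ) V :=
  (innerSL ℂ c).differentiable.comp_differentiableOn hf.differentiableOn

theorem eventually_inner_fderiv_eq (hf : IsNullLinePreserving f V) (hV : IsOpen V) {p ζ : E}
    (hp : p ∈ V) (hp1 : ‖p‖ = 1) (hζ : ⟪p, ζ⟫_ℂ = 0) {κ : ℂ}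
    (hκ : ∀ τ : ℂ, p + τ • ζ ∈ V →
      ∃ μ, (1 - κ * τ) * μ = τ ∧ f (p + τ • ζ) = f p + μ • fderiv ℂ f p ζ) {ε : ℂ} (hε : ε ≠ 0)
    (hεV : p + ε • ζ ∈ V) (hζ0 : ζ ≠ 0) : ∀ᶠ w in 𝓝 (p + ε • ζ),
      (⟪f w, fderiv ℂ f p ζ⟫_ℂ - κ * (⟪f w, f p⟫_ℂ - 1)) * (⟪w, p⟫_ℂ - 1) =
        (⟪f w, f p⟫_ℂ - 1) * ⟪w, ζ⟫_ℂ := by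
  have hζp : ⟪ζ, p⟫_ℂ = 0 := inner_eq_zero_symm.1 hζ
  have hεζ : ⟪p + ε • ζ, ζ⟫_ℂ ≠ 0 := by
    simpa [inner_add_left, inner_smul_left, hζ] using And.intro hζ0 hε
  have hεp : ⟪p + ε • ζ, p⟫_ℂ = 1 := by
    rw [inner_add_left, inner_smul_left, hζp, inner_self_eq_norm_sq_to_K, hp1]
    simp
  have hcont (d : E) : ContinuousAt (fun w : E => ⟪w, d⟫_ℂ) (p + ε • ζ) := by fun_prop
  have hσ : ContinuousAt (fun w => p + ((1 - ⟪w, p⟫_ℂ) / ⟪w, ζ⟫_ℂ) • ζ) (p + ε • ζ) :=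
    ((((hcont p).const_sub 1).div (hcont ζ) hεζ).smul_const ζ).const_add p
  filter_upwards [hσ.eventually (hV.mem_nhds (by simpa [hεp] using hp)), hV.eventually_mem hεV,
    (hcont ζ).eventually_ne hεζ] with w hσV hwV hwζ
  obtain ⟨μ, hμ, hfμ⟩ := hκ _ hσV
  have hone := hf.inner_eq_one _ hσV w hwV (by
    rw [inner_add_right, inner_smul_right, div_mul_cancel₀ _ hwζ, add_sub_cancel])
  rw [hfμ, inner_add_right, inner_smul_right] at hone
  field_simp at hμ
  linear_combination (⟪w, ζ⟫_ℂ - κ * (1 - ⟪w, p⟫_ℂ)) * (-hone) + ⟪f w, fderiv ℂ f p ζ⟫_ℂ * hμ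

theorem inner_fderiv_eq (hf : IsNullLinePreserving f V) (hV : IsOpen V)
    (hVc : IsPreconnected V) {p ζ : E}
    (hp : p ∈ V) (hp1 : ‖p‖ = 1) (hζ : ⟪p, ζ⟫_ℂ = 0) {κ : ℂ}
    (hκ : ∀ τ : ℂ, p + τ • ζ ∈ V →
      ∃ μ, (1 - κ * τ) * μ = τ ∧ f (p + τ • ζ) = f p + μ • fderiv ℂ f p ζ)
    (hζ0 : ζ ≠ 0) {w : E} (hw : w ∈ V) :
    (⟪f w, fderiv ℂ f p ζ⟫_ℂ - κ * (⟪f w, f p⟫_ℂ - 1)) * (⟪w, p⟫_ℂ - 1) =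
      (⟪f w, f p⟫_ℂ - 1) * ⟪w, ζ⟫_ℂ := by
  set b := fderiv ℂ f p ζ
  obtain ⟨ε, hεV, hε⟩ := (((eventually_add_smul_mem hV hp ζ).filter_mono
    (nhdsWithin_le_nhds (s := {0}ᶜ))).and eventually_mem_nhdsWithin).exists
  have hconj (w : E) : (starRingEnd ℂ) ((⟪f w, b⟫_ℂ - κ * (⟪f w, f p⟫_ℂ - 1)) * (⟪w, p⟫_ℂ - 1) -
      (⟪f w, f p⟫_ℂ - 1) * ⟪w, ζ⟫_ℂ) =
      (⟪b, f w⟫_ℂ - (starRingEnd ℂ) κ * (⟪f p, f w⟫_ℂ - 1)) * (⟪p, w⟫_ℂ - 1) -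
      (⟪f p, f w⟫_ℂ - 1) * ⟪ζ, w⟫_ℂ := by
    simp only [map_sub, map_mul, map_one, inner_conj_symm]
  have hd (d : E) : DifferentiableOn ℂ (fun w => ⟪d, w⟫_ℂ) V :=
    (innerSL ℂ d).differentiable.differentiableOn
  have hfp := (hf.differentiableOn_inner (f p)).sub_const 1
  have hhol := CurveHolomorphicOn.of_differentiableOn <|
    (((hf.differentiableOn_inner b).fun_sub (hfp.const_mul ((starRingEnd ℂ) κ))).fun_mul
      ((hd p).sub_const 1)).fun_sub (hfp.fun_mul (hd ζ))
  have hzero := hhol.eqOn_zero_of_isPreconnected hV hVc hεV <| by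
    filter_upwards [hf.eventually_inner_fderiv_eq hV hp hp1 hζ hκ hε hεV hζ0] with w hw
    rw [← hconj, sub_eq_zero.2 hw, map_zero]
  rw [← sub_eq_zero, ← map_eq_zero (starRingEnd ℂ), hconj]
  exact hzero hw

theorem exists_ne_zero_forall_mul_eq (hf : IsNullLinePreserving f V) (hV : IsOpen V)
    (hVc : IsPreconnected V) {p z : E} (hp : p ∈ V) (hp1 : ‖p‖ = 1) (hz : z ∈ V)
    (hpz : ⟪p, z⟫_ℂ = 1) (hb : fderiv ℂ f p (z - p) ≠ 0) :
    ∃ c : ℂ, c ≠ 0 ∧ ∀ w ∈ V,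
      c * (⟪f w, f z⟫_ℂ - 1) * (⟪w, p⟫_ℂ - 1) = (⟪f w, f p⟫_ℂ - 1) * (⟪w, z⟫_ℂ - 1) := by
  have hζ : ⟪p, z - p⟫_ℂ = 0 := by
    rw [inner_sub_right, hpz, inner_self_eq_norm_sq_to_K, hp1]
    simp
  obtain ⟨κ, hκ⟩ := hf.exists_forall_eq_add_smul hV hp hp1 hζ hb
  obtain ⟨μ, hμ, hfμ⟩ := hκ 1 (by simpa using hz)
  rw [one_smul, add_sub_cancel] at hfμ
  rw [mul_one] at hμ
  refine ⟨1 - κ, left_ne_zero_of_mul (hμ ▸ one_ne_zero), fun w hw => ?_⟩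
  have h := hf.inner_fderiv_eq hV hVc hp hp1 hζ hκ (fun h => hb (by rw [h, map_zero])) hw
  rw [inner_sub_right] at h
  rw [hfμ, inner_add_right, inner_smul_right]
  linear_combination h + ⟪f w, fderiv ℂ f p (z - p)⟫_ℂ * (⟪w, p⟫_ℂ - 1) * hμ

theorem exists_fderiv_sub_ne_zero (hf : IsNullLinePreserving f V) (hV : IsOpen V)
    (hVc : IsPreconnected V) (hne : ∃ z ∈ V, ∃ w ∈ V, f z ≠ f w) :
    ∃ z ∈ V, ∃ p ∈ V, fderiv ℂ f p (z - p) ≠ 0 := by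
  by_contra! hcon
  obtain ⟨z, hz, w, hw, hzw⟩ := hne
  refine hzw (hV.is_const_of_fderiv_eq_zero hVc hf.differentiableOn (fun x hx => ?_) hz hw)
  ext d
  obtain ⟨t, htV, ht⟩ := (((eventually_add_smul_mem hV hx d).filter_mono
    (nhdsWithin_le_nhds (s := {0}ᶜ))).and eventually_mem_nhdsWithin).exists
  have h := hcon _ htV x hx
  rw [add_sub_cancel_left, map_smul] at h
  exact (smul_eq_zero.1 h).resolve_left ht

theorem exists_one_lt_norm_of_re_inner_pos (hf : IsNullLinePreserving f V) (hV : IsOpen V) {p : E}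
    (hp : p ∈ V) (hp1 : ‖p‖ = 1) (hpos : 0 < (⟪fderiv ℂ f p p, f p⟫_ℂ).re) :
    ∃ o ∈ V, 1 < ‖o‖ ∧ 1 < ‖f o‖ := by
  have hfp : ‖f p‖ ^ 2 = 1 := by
    have h := hf.inner_eq_one p hp p hp (by simp [inner_self_eq_norm_sq_to_K, hp1])
    rw [← inner_self_eq_norm_sq (𝕜 := ℂ), h, RCLike.one_re]
  have hderiv : HasDerivAt (fun t : ℝ => ‖f (p + (t : ℂ) • p)‖ ^ 2 - 1)
      (2 * (⟪fderiv ℂ f p p, f p⟫_ℂ).re) 0 := by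
    let := InnerProductSpace.complexToReal (G := G)
    have h := (HasDerivAt.norm_sq (F := G) ((hf.hasDerivAt_add_smul hV hp p).scomp_of_eq 0
      Complex.ofRealCLM.hasDerivAt rfl)).sub_const 1
    simpa [real_inner_eq_re_inner ℂ, inner_re_symm (𝕜 := ℂ) (f p)] using h
  have hsign := eventually_nhdsWithin_sign_eq_of_deriv_pos
    (by rw [hderiv.deriv]; positivity) (by simp [hfp])
  have htV : ∀ᶠ t : ℝ in 𝓝 0, p + (t : ℂ) • p ∈ V :=
    (Complex.continuous_ofReal.tendsto' 0 0 Complex.ofReal_zero).eventually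
      (eventually_add_smul_mem hV hp p)
  obtain ⟨t, ⟨htV, hsign⟩, ht⟩ := (((htV.and hsign).filter_mono
    (nhdsWithin_le_nhds (s := Ioi 0))).and eventually_mem_nhdsWithin).exists
  refine ⟨_, htV, ?_, ?_⟩
  · have hsmul : p + (t : ℂ) • p = ((1 + t : ℝ) : ℂ) • p := by
      rw [Complex.ofReal_add, add_smul, Complex.ofReal_one, one_smul]
    rw [hsmul, norm_smul, hp1, mul_one, Complex.norm_of_nonneg (add_pos one_pos ht).le]
    exact lt_add_of_pos_right 1 ht
  · rw [sub_zero, sign_pos (mem_Ioi.1 ht), sign_eq_one_iff, sub_pos] at hsign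
    exact (one_lt_sq_iff₀ (norm_nonneg _)).1 hsign

theorem differentiableOn_inner_sub_one_mul (hf : IsNullLinePreserving f V) (w w' : E) :
    DifferentiableOn ℂ (fun q : E × E =>
      (⟪f w, f q.1⟫_ℂ - 1) * (⟪w, q.2⟫_ℂ - 1) * ((⟪f w', f q.2⟫_ℂ - 1) * (⟪w', q.1⟫_ℂ - 1)))
      (V ×ˢ V) := by
  have hf₁ := ((hf.differentiableOn_inner (f w)).comp differentiableOn_fst
    fun (q : E × E) (hq : q ∈ V ×ˢ V) => hq.1).sub_const 1
  have hf₂ := ((hf.differentiableOn_inner (f w')).comp differentiableOn_snd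
    fun (q : E × E) (hq : q ∈ V ×ˢ V) => hq.2).sub_const 1
  have hd₁ : DifferentiableOn ℂ (fun q : E × E => ⟪w', q.1⟫_ℂ - 1) (V ×ˢ V) :=
    ((innerSL ℂ w').differentiable.comp differentiable_fst).differentiableOn.sub_const 1
  have hd₂ : DifferentiableOn ℂ (fun q : E × E => ⟪w, q.2⟫_ℂ - 1) (V ×ˢ V) :=
    ((innerSL ℂ w).differentiable.comp differentiable_snd).differentiableOn.sub_const 1
  exact (hf₁.fun_mul hd₂).fun_mul (hf₂.fun_mul hd₁)

variable [CompleteSpace G]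

theorem curveHolomorphicOn_fderiv_sub (hf : IsNullLinePreserving f V) (hV : IsOpen V) :
    CurveHolomorphicOn (fun q : E × E => fderiv ℂ f q.2 (q.1 - q.2)) (V ×ˢ V) :=
  (CurveHolomorphicOn.fderiv_apply hV hf.differentiableOn).comp_differentiableOn
    (g := fun q : E × E => (q.2, q.1 - q.2)) (by fun_prop) fun _ hq => ⟨hq.2, mem_univ _⟩

variable [CompleteSpace E]

theorem inner_sub_one_mul_comm (hf : IsNullLinePreserving f V) (hE : 1 < Module.finrank ℂ E)
    (hV : IsOpen V) (hVc : Convex ℝ V) {p : E} (hp : p ∈ V) (hp1 : ‖p‖ = 1)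
    (hne : ∃ z ∈ V, ∃ w ∈ V, f z ≠ f w) {w w' x y : E} (hw : w ∈ V) (hw' : w' ∈ V) (hx : x ∈ V)
    (hy : y ∈ V) :
    (⟪f w, f x⟫_ℂ - 1) * (⟪w, y⟫_ℂ - 1) * ((⟪f w', f y⟫_ℂ - 1) * (⟪w', x⟫_ℂ - 1)) =
      (⟪f w, f y⟫_ℂ - 1) * (⟪w, x⟫_ℂ - 1) * ((⟪f w', f x⟫_ℂ - 1) * (⟪w', y⟫_ℂ - 1)) := by
  obtain ⟨z₀, hz₀, p₀, hp₀, hne₀⟩ := hf.exists_fderiv_sub_ne_zero hV hVc.isPreconnected hne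
  have hk := hf.curveHolomorphicOn_fderiv_sub hV
  set h : E × E → ℂ := fun q =>
    (⟪f w, f q.1⟫_ℂ - 1) * (⟪w, q.2⟫_ℂ - 1) * ((⟪f w', f q.2⟫_ℂ - 1) * (⟪w', q.1⟫_ℂ - 1)) -
      (⟪f w, f q.2⟫_ℂ - 1) * (⟪w, q.1⟫_ℂ - 1) * ((⟪f w', f q.1⟫_ℂ - 1) * (⟪w', q.2⟫_ℂ - 1))
    with hdef
  have hh : CurveHolomorphicOn h (V ×ˢ V) := .of_differentiableOn <|
    (hf.differentiableOn_inner_sub_one_mul w w').fun_sub <|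
      (hf.differentiableOn_inner_sub_one_mul w' w).congr fun q _ => mul_comm _ _
  have hnull : ∀ z ∈ V, ∀ p ∈ V, ‖p‖ = 1 → ⟪p, z⟫_ℂ = 1 →
      h (z, p) • fderiv ℂ f p (z - p) = 0 := fun z hz p hp hp1 hpz => by
    by_cases hb : fderiv ℂ f p (z - p) = 0
    · rw [hb, smul_zero]
    obtain ⟨c, hc, hcw⟩ := hf.exists_ne_zero_forall_mul_eq hV hVc.isPreconnected hp hp1 hz hpz hb
    refine smul_eq_zero_of_left ((mul_eq_zero.1 ?_).resolve_left hc) _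
    linear_combination (⟪f w', f p⟫_ℂ - 1) * (⟪w', z⟫_ℂ - 1) * hcw w hw -
      (⟪f w, f p⟫_ℂ - 1) * (⟪w, z⟫_ℂ - 1) * hcw w' hw'
  have hmul := (hh.smul hk).eqOn_zero_of_isNull_pair hE hV hVc.isPreconnected hp hp1 hnull
  have hzero : EqOn h 0 (V ×ˢ V) :=
    hh.eqOn_zero_of_smul_eq_zero (hV.prod hV) (hVc.prod hVc) hk hmul (mk_mem_prod hz₀ hp₀) hne₀
  simpa only [hdef, Pi.zero_apply, sub_eq_zero] using hzero (mk_mem_prod hx hy)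

theorem exists_isNull_fderiv_sub_ne_zero (hf : IsNullLinePreserving f V)
    (hE : 1 < Module.finrank ℂ E) (hV : IsOpen V) (hVc : IsPreconnected V) {p : E} (hp : p ∈ V)
    (hp1 : ‖p‖ = 1) (hne : ∃ z ∈ V, ∃ w ∈ V, f z ≠ f w) :
    ∃ p ∈ V, ‖p‖ = 1 ∧ ∃ z ∈ V, ⟪p, z⟫_ℂ = 1 ∧ fderiv ℂ f p (z - p) ≠ 0 := by
  by_contra! hcon
  obtain ⟨z, hz, w, hw, hzw⟩ := hf.exists_fderiv_sub_ne_zero hV hVc hne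
  exact hzw ((hf.curveHolomorphicOn_fderiv_sub hV).eqOn_zero_of_isNull_pair hE hV hVc hp hp1
    (fun z hz p hp hp1 hpz => hcon p hp hp1 z hz hpz) (mk_mem_prod hz hw))

theorem exists_one_lt_norm (hf : IsNullLinePreserving f V) (hE : 1 < Module.finrank ℂ E)
    (hV : IsOpen V) (hVc : IsPreconnected V) (hnull : ∃ p ∈ V, ‖p‖ = 1)
    (hne : ∃ z ∈ V, ∃ w ∈ V, f z ≠ f w) : ∃ o ∈ V, 1 < ‖o‖ ∧ 1 < ‖f o‖ := by
  obtain ⟨p₀, hp₀, hp₀1⟩ := hnull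
  obtain ⟨p, hp, hp1, z, -, hpz, hb⟩ :=
    hf.exists_isNull_fderiv_sub_ne_zero hE hV hVc hp₀ hp₀1 hne
  refine hf.exists_one_lt_norm_of_re_inner_pos hV hp hp1 ?_
  have hζ : ⟪p, z - p⟫_ℂ = 0 := by
    rw [inner_sub_right, hpz, inner_self_eq_norm_sq_to_K, hp1]
    simp
  have hnorm := hf.inner_fderiv_fderiv hV hp hp1 hζ
  rw [inner_self_eq_norm_sq_to_K, inner_self_eq_norm_sq_to_K] at hnorm
  have hre := congrArg Complex.re hnorm
  norm_cast at hre
  simp only [Complex.coe_algebraMap, Complex.ofReal_re, Complex.re_ofReal_mul] at hre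
  exact pos_of_mul_pos_right (hre ▸ pow_pos (norm_pos_iff.2 hb) 2) (sq_nonneg _)

theorem exists_inner_sub_one_eq (hf : IsNullLinePreserving f V) (hE : 1 < Module.finrank ℂ E)
    (hV : IsOpen V) (hVc : Convex ℝ V) (hnull : ∃ p ∈ V, ‖p‖ = 1)
    (hne : ∃ z ∈ V, ∃ w ∈ V, f z ≠ f w) :
    ∃ W ⊆ V, IsOpen W ∧ W.Nonempty ∧ ∃ H : E → ℂ, (∀ z ∈ W, H z ≠ 0) ∧ ∀ z ∈ W, ∀ w ∈ W,
      ⟪f w, f z⟫_ℂ - 1 = (starRingEnd ℂ) (H w) * H z * (⟪w, z⟫_ℂ - 1) := by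
  obtain ⟨o, ho, ho1, hfo1⟩ := hf.exists_one_lt_norm hE hV hVc.isPreconnected hnull hne
  obtain ⟨p, hp, hp1⟩ := hnull
  obtain ⟨c, hc, hoo⟩ := exists_inner_self_sub_one_eq_mul ho1 hfo1
  have hc0 : (c : ℂ) ≠ 0 := Complex.ofReal_ne_zero.2 hc
  have hfo : ⟪f o, f o⟫_ℂ - 1 ≠ 0 :=
    sub_ne_zero.2 fun h => (one_lt_pow₀ hfo1 two_ne_zero).ne'
      (by rw [← inner_self_eq_norm_sq (𝕜 := ℂ), h, RCLike.one_re])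
  refine ⟨V ∩ (fun z => (⟪f o, f z⟫_ℂ - 1) * (⟪o, z⟫_ℂ - 1)) ⁻¹' {0}ᶜ, inter_subset_left,
    (((hf.differentiableOn_inner (f o)).continuousOn.sub continuousOn_const).mul
      (by fun_prop)).isOpen_inter_preimage hV isOpen_compl_singleton,
    ⟨o, ho, mul_ne_zero hfo (hoo ▸ mul_ne_zero (pow_ne_zero 2 hc0) hfo)⟩,
    fun z => c * (⟪f o, f z⟫_ℂ - 1) / (⟪o, z⟫_ℂ - 1), fun z hz => ?_, fun z hz w hw => ?_⟩
  · have h := mul_ne_zero_iff.1 hz.2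
    exact div_ne_zero (mul_ne_zero hc0 h.1) h.2
  · have hoz : ⟪o, z⟫_ℂ - 1 ≠ 0 := right_ne_zero_of_mul hz.2
    have hwo : ⟪w, o⟫_ℂ - 1 ≠ 0 := by
      rw [← conj_inner_sub_one, map_ne_zero]
      exact right_ne_zero_of_mul hw.2
    have h := hf.inner_sub_one_mul_comm hE hV hVc hp hp1 hne hw.1 ho hz.1 ho
    rw [hoo] at h
    rw [map_div₀, map_mul, Complex.conj_ofReal, conj_inner_sub_one, conj_inner_sub_one]
    field_simp
    refine mul_left_cancel₀ hfo ?_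
    linear_combination h

end IsNullLinePreserving

end NullLineRigidity

section LorentzForms

open Set Filter Topology
open scoped InnerProductSpace

variable {E G ι κ : Type*} [NormedAddCommGroup E] [InnerProductSpace ℂ E] [NormedAddCommGroup G]
  [InnerProductSpace ℂ G]

/-- The Hermitian form of signature `(1, dim E)` on the homogeneous coordinates `ℂ × E` of
`𝒢(1, dim E)`, conjugate-linear in the first argument. -/
def lorentzForm : (ℂ × E) →ₗ⋆[ℂ] (ℂ × E) →ₗ[ℂ] ℂ :=
  LinearMap.mk₂'ₛₗ (starRingEnd ℂ) (RingHom.id ℂ)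
    (fun x y => (starRingEnd ℂ) x.1 * y.1 - ⟪x.2, y.2⟫_ℂ)
    (fun x x' y => by simp; ring) (fun c x y => by simp; ring)
    (fun x y y' => by simp; ring) (fun c x y => by simp; ring)

theorem lorentzForm_apply (x y : ℂ × E) :
    lorentzForm x y = (starRingEnd ℂ) x.1 * y.1 - ⟪x.2, y.2⟫_ℂ := rfl

theorem conj_lorentzForm (x y : ℂ × E) : (starRingEnd ℂ) (lorentzForm x y) = lorentzForm y x := by
  simp only [lorentzForm_apply, map_sub, map_mul, Complex.conj_conj, inner_conj_symm, mul_comm]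

theorem lorentzForm_self (x : ℂ × E) : lorentzForm x x = ((‖x.1‖ ^ 2 - ‖x.2‖ ^ 2 : ℝ) : ℂ) := by
  simp [lorentzForm_apply, Complex.conj_mul', inner_self_eq_norm_sq_to_K]

theorem eq_zero_of_lorentzForm_eq_zero {J u : ℂ × E} (hJ : lorentzForm J J = 1)
    (hJu : lorentzForm J u = 0) (hu : lorentzForm u u = 0) : u = 0 := by
  rw [lorentzForm_self, ← Complex.ofReal_one, Complex.ofReal_inj] at hJ
  rw [lorentzForm_self, Complex.ofReal_eq_zero, sub_eq_zero] at hu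
  have hle : ‖J.1‖ * ‖u.1‖ ≤ ‖J.2‖ * ‖u.2‖ := by
    rw [lorentzForm_apply, sub_eq_zero] at hJu
    simpa [← hJu] using norm_inner_le_norm (𝕜 := ℂ) J.2 u.2
  have hu1 : ‖u.1‖ ^ 2 = 0 := by
    have := mul_self_le_mul_self (by positivity) hle
    nlinarith [sq_nonneg ‖u.1‖]
  refine Prod.ext ?_ ?_
  · simpa using hu1
  · simpa [hu1] using hu.symm

theorem exists_involutive_lorentzForm_isometry {J : ℂ × E} (hJ : lorentzForm J J = 1) :
    ∃ Λ : (ℂ × E) →ₗ[ℂ] ℂ × E, Function.Involutive Λ ∧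
      (∀ x y, lorentzForm (Λ x) (Λ y) = lorentzForm x y) ∧ (Λ J).2 = 0 := by
  obtain ⟨t, ht⟩ : ∃ t : ℝ, t = ‖J.1‖ := ⟨_, rfl⟩
  have ht0 : 0 < t := by
    rw [lorentzForm_self, ← Complex.ofReal_one, Complex.ofReal_inj] at hJ
    exact (ht ▸ norm_nonneg _).lt_of_ne fun h => by nlinarith [sq_nonneg ‖J.2‖]
  have ht0' : (t : ℂ) ≠ 0 := Complex.ofReal_ne_zero.2 ht0.ne'
  have ht1 : (1 + t : ℂ) ≠ 0 := by
    norm_cast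
    positivity
  set e : ℂ × E := (J.1 / t, 0)
  have hJe : lorentzForm J e = t := by
    simp only [e, lorentzForm_apply, inner_zero_right, sub_zero, ← mul_div_assoc,
      Complex.conj_mul', ← ht]
    field_simp
  have heJ : lorentzForm e J = t := by rw [← conj_lorentzForm, hJe, Complex.conj_ofReal]
  have hee : lorentzForm e e = 1 := by
    simp [e, lorentzForm_self, ← ht, ht0.ne', abs_of_pos ht0]
  -- The hyperbolic reflection in `J + e` sends `J` to `-e`.
  have hv : ((1 + t : ℂ)⁻¹ • lorentzForm (J + e)) (J + e) = 2 := by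
    simp only [LinearMap.smul_apply, map_add, LinearMap.add_apply, hJ, hJe, heJ, hee, smul_eq_mul]
    field_simp
    ring
  refine ⟨Module.reflection hv, Module.involutive_reflection hv, fun x y => ?_, ?_⟩
  · have hconj : (starRingEnd ℂ) (1 + t : ℂ) = 1 + t := by simp
    simp only [LinearMap.smul_apply, smul_eq_mul] at hv
    simp only [LinearEquiv.coe_coe, Module.reflection_apply, LinearMap.smul_apply, map_sub,
      LinearMap.sub_apply, LinearMap.map_smulₛₗ, RingHom.id_apply, smul_eq_mul, map_mul, map_inv₀,
      hconj, conj_lorentzForm]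
    linear_combination ((1 + t : ℂ)⁻¹ * lorentzForm (J + e) y * lorentzForm x (J + e)) * hv
  · have hJv : ((1 + t : ℂ)⁻¹ • lorentzForm (J + e)) J = 1 := by
      simp only [LinearMap.smul_apply, map_add, LinearMap.add_apply, hJ, heJ, smul_eq_mul]
      exact inv_mul_cancel₀ ht1
    rw [LinearEquiv.coe_coe, Module.reflection_apply, hJv, one_smul, sub_add_cancel_left]
    simp [e]

/-- An orthonormal family for the negative of the Lorentz form, lying in the complement of a
timelike vector `J`. -/
structure IsSpacelikeOrthonormal [DecidableEq ι] (J : ℂ × E) (n : ι → ℂ × E) : Prop where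
  lorentzForm_eq_ite : ∀ i j, lorentzForm (n i) (n j) = if i = j then -1 else 0
  lorentzForm_left : ∀ i, lorentzForm J (n i) = 0

namespace IsSpacelikeOrthonormal

variable [DecidableEq ι] {J : ℂ × E} {n : ι → ℂ × E}

theorem iff_orthonormal_snd (hJ : lorentzForm J J = 1) (hJ2 : J.2 = 0) :
    IsSpacelikeOrthonormal J n ↔ (∀ i, (n i).1 = 0) ∧ Orthonormal ℂ fun i => (n i).2 := by
  have hJ1 : J.1 ≠ 0 := by
    rintro h
    simp [lorentzForm_apply, h, hJ2] at hJ
  have hleft (i) : lorentzForm J (n i) = 0 ↔ (n i).1 = 0 := by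
    simp [lorentzForm_apply, hJ2, hJ1]
  rw [orthonormal_iff_ite]
  refine ⟨fun h => ⟨fun i => (hleft i).1 (h.2 i), fun i j => ?_⟩, fun h => ⟨fun i j => ?_,
    fun i => (hleft i).2 (h.1 i)⟩⟩
  · have hij := h.1 i j
    rw [lorentzForm_apply, (hleft j).1 (h.2 j), mul_zero, zero_sub, neg_eq_iff_eq_neg] at hij
    rw [hij]
    split_ifs <;> simp
  · rw [lorentzForm_apply, h.1 j, mul_zero, zero_sub, h.2 i j]
    split_ifs <;> simp

theorem map {Λ : (ℂ × E) →ₗ[ℂ] ℂ × E} (hn : IsSpacelikeOrthonormal J n)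
    (hΛ : ∀ x y, lorentzForm (Λ x) (Λ y) = lorentzForm x y) :
    IsSpacelikeOrthonormal (Λ J) (Λ ∘ n) :=
  ⟨fun i j => by simp [hΛ, hn.1], fun i => by simp [hΛ, hn.2]⟩

variable [FiniteDimensional ℂ E]

theorem card_le_finrank [Fintype ι] (hJ : lorentzForm J J = 1)
    (hn : IsSpacelikeOrthonormal J n) : Fintype.card ι ≤ Module.finrank ℂ E := by
  obtain ⟨Λ, -, hΛ, hJ2⟩ := exists_involutive_lorentzForm_isometry hJ
  exact ((iff_orthonormal_snd (by rw [hΛ, hJ]) hJ2).1 (hn.map hΛ)).2.linearIndependent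
    |>.fintype_card_le_finrank

theorem exists_sumElim [Fintype ι] [Fintype κ] [DecidableEq κ] (hJ : lorentzForm J J = 1)
    (hn : IsSpacelikeOrthonormal J n)
    (hcard : Fintype.card ι + Fintype.card κ = Module.finrank ℂ E) :
    ∃ m : κ → ℂ × E, IsSpacelikeOrthonormal J (Sum.elim n m) := by
  obtain ⟨Λ, hinv, hΛ, hJ2⟩ := exists_involutive_lorentzForm_isometry hJ
  have hJ' : lorentzForm (Λ J) (Λ J) = 1 := by rw [hΛ, hJ]
  have hΛn := (iff_orthonormal_snd hJ' hJ2).1 (hn.map hΛ)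
  set e := Equiv.ofInjective (Sum.inl : ι → ι ⊕ κ) Sum.inl_injective
  obtain ⟨b, hb⟩ := Orthonormal.exists_orthonormalBasis_extension_of_card_eq
    (v := Sum.elim (fun i => (Λ (n i)).2) 0) (s := range (Sum.inl : ι → ι ⊕ κ))
    (by rw [Fintype.card_sum, hcard]) <| by
      convert hΛn.2.comp e.symm e.symm.injective using 1
      ext ⟨_, i, rfl⟩
      simp [e]
  have hsnd : Sum.elim n (fun k => Λ (0, b (Sum.inr k))) = Λ ∘ fun i => (0, b i) := by
    refine funext (Sum.rec (fun i => ?_) fun k => rfl)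
    have hbi : ((0 : ℂ), b (Sum.inl i)) = Λ (n i) :=
      Prod.ext (hΛn.1 i).symm (hb _ (mem_range_self i))
    rw [Sum.elim_inl, Function.comp_apply, hbi, hinv]
  refine ⟨fun k => Λ (0, b (Sum.inr k)), ?_⟩
  have := ((iff_orthonormal_snd (n := fun i => ((0 : ℂ), b i)) hJ' hJ2).2
    ⟨fun _ => rfl, b.orthonormal⟩).map hΛ
  rwa [hinv, ← hsnd] at this

end IsSpacelikeOrthonormal

theorem exists_lorentzForm_isometry_of_eq {x : ι → ℂ × E} {y : ι → ℂ × G}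
    (hx : Submodule.span ℂ (range x) = ⊤)
    (hxy : ∀ i j, lorentzForm (y i) (y j) = lorentzForm (x i) (x j)) :
    ∃ T : (ℂ × E) →ₗ[ℂ] ℂ × G, (∀ a b, lorentzForm (T a) (T b) = lorentzForm a b) ∧
      ∀ i, T (x i) = y i := by
  set X := Finsupp.linearCombination ℂ x
  set Y := Finsupp.linearCombination ℂ y
  obtain ⟨g, hg⟩ := X.exists_rightInverse_of_surjective
    (by rw [Finsupp.range_linearCombination, hx])
  replace hg (a) : X (g a) = a := LinearMap.congr_fun hg a
  have hform (c d : ι →₀ ℂ) : lorentzForm (Y c) (Y d) = lorentzForm (X c) (X d) := by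
    simp only [X, Y, Finsupp.linearCombination_apply, Finsupp.sum, map_sum, LinearMap.sum_apply,
      LinearMap.map_smulₛₗ, LinearMap.smul_apply, hxy]
  have hker {c d : ι →₀ ℂ} (h : X c = X d) : Y c = Y d := by
    rw [← sub_eq_zero, ← map_sub] at h ⊢
    exact eq_zero_of_lorentzForm_eq_zero (J := Y (g (1, 0)))
      (by simp [hform, hg, lorentzForm_apply]) (by rw [hform, h, map_zero])
      (by rw [hform, h, map_zero])
  refine ⟨Y ∘ₗ g, fun a b => by simp [hform, hg], fun i => ?_⟩
  rw [LinearMap.comp_apply, hker (d := Finsupp.single i 1) (by simp [hg, X])]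
  simp [Y]

theorem span_range_one_prodMk {W : Set E} (hW : IsOpen W) (hne : W.Nonempty) :
    Submodule.span ℂ (range fun w : W => ((1 : ℂ), (w : E))) = ⊤ := by
  obtain ⟨o, ho⟩ := hne
  set S := Submodule.span ℂ (range fun w : W => ((1 : ℂ), (w : E)))
  have hS {w : E} (hw : w ∈ W) : ((1 : ℂ), w) ∈ S := Submodule.subset_span ⟨⟨w, hw⟩, rfl⟩
  have hsnd (d : E) : ((0 : ℂ), d) ∈ S := by
    obtain ⟨t, htW, ht⟩ := (((eventually_add_smul_mem hW ho d).filter_mono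
      (nhdsWithin_le_nhds (s := {0}ᶜ))).and eventually_mem_nhdsWithin).exists
    have hsmul : t • ((0 : ℂ), d) = (1, o + t • d) - (1, o) := by simp
    rw [← S.smul_mem_iff ht, hsmul]
    exact S.sub_mem (hS htW) (hS ho)
  refine eq_top_iff.2 fun ⟨c, d⟩ _ => ?_
  have hsum : ((c, d) : ℂ × E) = c • (1, o) + (0, d - c • o) := by simp
  exact hsum ▸ S.add_mem (S.smul_mem c (hS ho)) (hsnd _)

end LorentzForms

section Linearization

open Set Filter Topology Metric
open scoped InnerProductSpace

variable {E A G : Type*} [NormedAddCommGroup E] [InnerProductSpace ℂ E] [NormedAddCommGroup A]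
  [InnerProductSpace ℂ A] [NormedAddCommGroup G] [InnerProductSpace ℂ G]
  {F : E → A →L[ℂ] G} {V : Set E}

theorem IsNullLinePreserving.exists_lorentzForm_isometry [CompleteSpace E] [CompleteSpace G]
    {f : E → G} (hf : IsNullLinePreserving f V) (hE : 1 < Module.finrank ℂ E) (hV : IsOpen V)
    (hVc : Convex ℝ V) (hnull : ∃ p ∈ V, ‖p‖ = 1) (hne : ∃ z ∈ V, ∃ w ∈ V, f z ≠ f w) :
    ∃ T : (ℂ × E) →ₗ[ℂ] ℂ × G, (∀ x y, lorentzForm (T x) (T y) = lorentzForm x y) ∧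
      ∃ W ⊆ V, IsOpen W ∧ W.Nonempty ∧ ∀ z ∈ W, T (1, z) = (T (1, z)).1 • (1, f z) := by
  obtain ⟨W, hWV, hW, hWne, H, hH, hinner⟩ := hf.exists_inner_sub_one_eq hE hV hVc hnull hne
  obtain ⟨T, hT, hTW⟩ :=
    exists_lorentzForm_isometry_of_eq (span_range_one_prodMk hW hWne)
      (y := fun z : W => (H z)⁻¹ • ((1 : ℂ), f z)) fun w z => by
      have hw := (map_ne_zero (starRingEnd ℂ)).2 (hH w w.2)
      have hz := hH z z.2
      have h := hinner z z.2 w w.2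
      simp only [LinearMap.map_smulₛₗ, LinearMap.smul_apply, RingHom.id_apply, smul_eq_mul,
        map_inv₀, lorentzForm_apply, map_one, mul_one]
      field_simp
      linear_combination -h
  refine ⟨T, hT, W, hWV, hW, hWne, fun z hz => ?_⟩
  rw [hTW ⟨z, hz⟩, Prod.smul_fst, smul_eq_mul, mul_one]

namespace IsLocalOrthogonal

theorem eqOn_const_of_isOpen [CompleteSpace G] (hF : IsLocalOrthogonal F V) (hV : IsOpen V)
    (hVc : IsPreconnected V) {W : Set E} (hWV : W ⊆ V) (hW : IsOpen W) {x : E} (hx : x ∈ W) {β : A}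
    {c : G} (h : ∀ z ∈ W, F z β = c) {z : E} (hz : z ∈ V) : F z β = c :=
  sub_eq_zero.1 <| CurveHolomorphicOn.eqOn_zero_of_isPreconnected hV hVc
    (.of_differentiableOn ((hF.differentiableOn_apply β).sub_const c)) (hWV hx)
    (by filter_upwards [hW.mem_nhds hx] with w hw using sub_eq_zero.2 (h w hw)) hz

theorem eventually_inner_apply_eq (hF : IsLocalOrthogonal F V) (hV : IsOpen V) {p : E} (hp : p ∈ V)
    (hp1 : ‖p‖ = 1) {β : A} {c : G} (hβ : ∀ z ∈ V, F z β = c) (γ : A) :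
    ∀ᶠ z in 𝓝 p, ⟪c, F z γ⟫_ℂ = ⟪β, γ⟫_ℂ := by
  have hpp : ⟪p, p⟫_ℂ = 1 := by simp [inner_self_eq_norm_sq_to_K, hp1]
  have hinner : ContinuousAt (fun z => ⟪p, z⟫_ℂ) p := by fun_prop
  have hpp0 : ⟪p, p⟫_ℂ ≠ 0 := hpp ▸ one_ne_zero
  have hσ : ContinuousAt (fun z => (starRingEnd ℂ) (⟪p, z⟫_ℂ)⁻¹ • p) p :=
    (Complex.continuous_conj.continuousAt.comp (hinner.inv₀ hpp0)).smul_const p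
  have hσp : (fun z => (starRingEnd ℂ) (⟪p, z⟫_ℂ)⁻¹ • p) p ∈ V := by
    simpa [inner_self_eq_norm_sq_to_K, hp1] using hp
  filter_upwards [hV.mem_nhds hp, hσ.eventually (hV.mem_nhds hσp), hinner.eventually_ne hpp0]
    with z hz hw hpz
  rw [← hβ _ hw]
  exact hF.inner_eq z hz _ hw (by simp [hpz]) β γ

theorem inner_apply_eq (hF : IsLocalOrthogonal F V) (hV : IsOpen V)
    (hVc : IsPreconnected V) (hnull : ∃ p ∈ V, ‖p‖ = 1) {β : A} {c : G} (hβ : ∀ z ∈ V, F z β = c)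
    (γ : A) {z : E} (hz : z ∈ V) : ⟪c, F z γ⟫_ℂ = ⟪β, γ⟫_ℂ := by
  obtain ⟨p, hp, hp1⟩ := hnull
  have hd : DifferentiableOn ℂ (fun z => ⟪c, F z γ⟫_ℂ - ⟪β, γ⟫_ℂ) V :=
    ((innerSL ℂ c).differentiable.comp_differentiableOn (hF.differentiableOn_apply γ)).sub_const _
  refine sub_eq_zero.1 ((CurveHolomorphicOn.of_differentiableOn hd).eqOn_zero_of_isPreconnected
    hV hVc hp ?_ hz)
  filter_upwards [hF.eventually_inner_apply_eq hV hp hp1 hβ γ] with z hz using sub_eq_zero.2 hz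

theorem exists_ne_of_isOpen [CompleteSpace G] (hF : IsLocalOrthogonal F V) (hV : IsOpen V)
    (hVc : IsPreconnected V) (hne : ∃ z ∈ V, ∃ w ∈ V, F z ≠ F w) {W : Set E} (hWV : W ⊆ V)
    (hW : IsOpen W) {x : E} (hx : x ∈ W) : ∃ z ∈ W, ∃ w ∈ W, F z ≠ F w := by
  by_contra! hcon
  obtain ⟨z, hz, w, hw, hzw⟩ := hne
  have h {y} (hy : y ∈ V) (β) : F y β = F x β :=
    hF.eqOn_const_of_isOpen hV hVc hWV hW hx (fun u hu => by rw [hcon u hu x hx]) hy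
  exact hzw (ContinuousLinearMap.ext fun β => (h hz β).trans (h hw β).symm)

variable [FiniteDimensional ℂ E] [FiniteDimensional ℂ G]

theorem isNullLinePreserving_apply (hF : IsLocalOrthogonal F V) (hV : IsOpen V)
    (hVc : Convex ℝ V)
    (hdim : Module.finrank ℂ G + 2 < 2 * Module.finrank ℂ E + Module.finrank ℂ A) {α : A}
    (hα : ‖α‖ = 1) : IsNullLinePreserving (fun z => F z α) V where
  differentiableOn := hF.differentiableOn_apply α
  inner_eq_one z hz w hw h := by simp [hF.inner_eq z hz w hw h, inner_self_eq_norm_sq_to_K, hα]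
  not_linearIndependent w hw hw1 ζ hζ a b ha hb h :=
    hF.not_linearIndependent_sub hV hVc hdim hw hw1 hζ ![a, b] (Fin.forall_fin_two.2 ⟨ha, hb⟩)
      (fun _ => α) <| by
        convert h using 1
        ext i
        fin_cases i <;> rfl

theorem exists_unit_exists_lorentzForm_isometry_of_convex [CompleteSpace A]
    (hF : IsLocalOrthogonal F V) (hV : IsOpen V) (hVc : Convex ℝ V)
    (hdim : Module.finrank ℂ G + 2 < 2 * Module.finrank ℂ E + Module.finrank ℂ A)
    (hnull : ∃ p ∈ V, ‖p‖ = 1) (hne : ∃ z ∈ V, ∃ w ∈ V, F z ≠ F w) :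
    ∃ α : A, ‖α‖ = 1 ∧ (∀ β, ⟪α, β⟫_ℂ = 0 → ∀ z ∈ V, ∀ w ∈ V, F z β = F w β) ∧
      ∃ T : (ℂ × E) →ₗ[ℂ] ℂ × G, (∀ x y, lorentzForm (T x) (T y) = lorentzForm x y) ∧
        ∃ W ⊆ V, IsOpen W ∧ W.Nonempty ∧ ∀ z ∈ W, T (1, z) = (T (1, z)).1 • (1, F z α) := by
  obtain ⟨α, hα, hconst⟩ := hF.exists_unit_forall_apply_eq hV hVc hdim hnull hne
  have hE : 1 < Module.finrank ℂ E :=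
    hnull.elim fun p hp => hF.one_lt_finrank hdim hp.1 hp.2
  refine ⟨α, hα, hconst, (hF.isNullLinePreserving_apply hV hVc hdim hα).exists_lorentzForm_isometry
    hE hV hVc hnull ?_⟩
  obtain ⟨z, hz, w, hw, hzw⟩ := hne
  refine ⟨z, hz, w, hw, fun h => hzw (ContinuousLinearMap.ext fun γ => ?_)⟩
  have hperp := hconst (γ - ⟪α, γ⟫_ℂ • α)
    (by simp [inner_self_eq_norm_sq_to_K, hα]) z hz w hw
  simpa [h] using hperp

theorem exists_unit_exists_lorentzForm_isometry [CompleteSpace A] (hF : IsLocalOrthogonal F V)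
    (hV : IsOpen V) (hVc : IsPreconnected V)
    (hdim : Module.finrank ℂ G + 2 < 2 * Module.finrank ℂ E + Module.finrank ℂ A)
    (hnull : ∃ p ∈ V, ‖p‖ = 1) (hne : ∃ z ∈ V, ∃ w ∈ V, F z ≠ F w) :
    ∃ α : A, ‖α‖ = 1 ∧ (∀ β, ⟪α, β⟫_ℂ = 0 → ∀ z ∈ V, ∀ w ∈ V, F z β = F w β) ∧
      ∃ T : (ℂ × E) →ₗ[ℂ] ℂ × G, (∀ x y, lorentzForm (T x) (T y) = lorentzForm x y) ∧
        ∀ z ∈ V, (T (1, z)).1 ≠ 0 ∧ T (1, z) = (T (1, z)).1 • (1, F z α) := by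
  obtain ⟨p, hp, hp1⟩ := hnull
  obtain ⟨ε, hε, hεV⟩ := Metric.isOpen_iff.1 hV p hp
  have hpε := mem_ball_self hε (x := p)
  obtain ⟨α, hα, hconst, T, hT, W, hWε, hW, ⟨o, ho⟩, hTW⟩ :=
    (hF.mono hεV).exists_unit_exists_lorentzForm_isometry_of_convex isOpen_ball (convex_ball p ε)
      hdim ⟨p, hpε, hp1⟩ (hF.exists_ne_of_isOpen hV hVc hne hεV isOpen_ball hpε)
  have hconst' {β} (hβ : ⟪α, β⟫_ℂ = 0) {z} (hz : z ∈ V) : F z β = F p β :=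
    hF.eqOn_const_of_isOpen hV hVc hεV isOpen_ball hpε (fun w hw => hconst β hβ w hw p hpε) hz
  have hTd : Differentiable ℂ fun z : E => T (1, z) :=
    T.toContinuousLinearMap.differentiable.comp ((differentiable_const 1).prodMk differentiable_id)
  have hdiff : DifferentiableOn ℂ (fun z => T (1, z) - (T (1, z)).1 • (1, F z α)) V :=
    hTd.differentiableOn.sub <| hTd.fst.differentiableOn.smul <|
      (differentiableOn_const 1).prodMk (hF.differentiableOn_apply α)
  refine ⟨α, hα, fun β hβ z hz w hw => (hconst' hβ hz).trans (hconst' hβ hw).symm, T, hT,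
    fun z hz => ?_⟩
  have hTz : T (1, z) = (T (1, z)).1 • (1, F z α) :=
    sub_eq_zero.1 <| (CurveHolomorphicOn.of_differentiableOn hdiff).eqOn_zero_of_isPreconnected
      hV hVc (hεV (hWε ho))
      (by filter_upwards [hW.mem_nhds ho] with w hw using sub_eq_zero.2 (hTW w hw)) hz
  refine ⟨fun h0 => ?_, hTz⟩
  have h := hT (1, z) (1, 0)
  rw [hTz, h0, zero_smul] at h
  simp [lorentzForm_apply] at h

end IsLocalOrthogonal

end Linearization

section AdaptedFrames

open Set
open scoped InnerProductSpace

variable {E A G ι κ : Type*} [NormedAddCommGroup E] [InnerProductSpace ℂ E] [NormedAddCommGroup A]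
  [InnerProductSpace ℂ A] [NormedAddCommGroup G] [InnerProductSpace ℂ G]
  {F : E → A →L[ℂ] G} {V : Set E}

theorem exists_orthonormalBasis_apply_eq [Fintype ι] [FiniteDimensional ℂ A]
    (hι : Module.finrank ℂ A = Fintype.card ι) (i : ι) {α : A} (hα : ‖α‖ = 1) :
    ∃ b : OrthonormalBasis ι ℂ A, b i = α := by
  have h : Orthonormal ℂ (({i} : Set ι).domRestrict fun _ => α) :=
    ⟨fun _ => hα, fun j k hjk => (hjk (Subsingleton.elim _ _)).elim⟩
  obtain ⟨b, hb⟩ := h.exists_orthonormalBasis_extension_of_card_eq hι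
  exact ⟨b, hb i rfl⟩

theorem IsLocalOrthogonal.inner_snd_eq_zero (hF : IsLocalOrthogonal F V)
    (hV : IsOpen V) (hVc : IsPreconnected V) (hnull : ∃ p ∈ V, ‖p‖ = 1) {α β : A}
    (hαβ : ⟪β, α⟫_ℂ = 0) {c : G} (hβ : ∀ z ∈ V, F z β = c) {T : (ℂ × E) →ₗ[ℂ] ℂ × G}
    (hT : ∀ z ∈ V, T (1, z) = (T (1, z)).1 • (1, F z α)) (x : ℂ × E) : ⟪c, (T x).2⟫_ℂ = 0 := by
  have hspan := span_range_one_prodMk hV (hnull.imp fun _ => And.left)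
  refine LinearMap.congr_fun (f := innerₛₗ ℂ c ∘ₗ LinearMap.snd ℂ ℂ G ∘ₗ T) (g := 0)
    (LinearMap.ext_on_range hspan fun z => ?_) x
  have h := hF.inner_apply_eq hV hVc hnull hβ α z.2
  change ⟪c, (T (1, (z : E))).2⟫_ℂ = 0
  rw [hT z z.2, Prod.smul_snd, inner_smul_right, h, hαβ, mul_zero]

variable [DecidableEq ι] [DecidableEq κ]

theorem IsSpacelikeOrthonormal.sumElim {J : ℂ × E} {n : ι → ℂ × E} {m : κ → ℂ × E}
    (hn : IsSpacelikeOrthonormal J n) (hm : IsSpacelikeOrthonormal J m)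
    (hnm : ∀ i j, lorentzForm (n i) (m j) = 0) :
    IsSpacelikeOrthonormal J (Sum.elim n m) where
  lorentzForm_eq_ite := by
    rintro (i | i) (j | j)
    · simp [hn.lorentzForm_eq_ite]
    · simp [hnm]
    · simp [← conj_lorentzForm (n j), hnm]
    · simp [hm.lorentzForm_eq_ite]
  lorentzForm_left := Sum.rec hn.lorentzForm_left hm.lorentzForm_left

theorem IsSpacelikeOrthonormal.comp_of_injective {J : ℂ × E} {n : ι → ℂ × E}
    (hn : IsSpacelikeOrthonormal J n) {f : κ → ι} (hf : f.Injective) :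
    IsSpacelikeOrthonormal J (n ∘ f) :=
  ⟨fun i j => by simp [hn.lorentzForm_eq_ite, hf.eq_iff], fun i => hn.lorentzForm_left _⟩

theorem IsLocalOrthogonal.exists_isSpacelikeOrthonormal [Fintype κ] [FiniteDimensional ℂ A]
    [FiniteDimensional ℂ G] (e : OrthonormalBasis κ ℂ E) {r : ℕ} (hr : Module.finrank ℂ A = r + 1)
    (hF : IsLocalOrthogonal F V) (hV : IsOpen V) (hVc : IsPreconnected V)
    (hdim : Module.finrank ℂ G + 2 < 2 * Module.finrank ℂ E + Module.finrank ℂ A)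
    (hnull : ∃ p ∈ V, ‖p‖ = 1) (hne : ∃ z ∈ V, ∃ w ∈ V, F z ≠ F w) :
    ∃ (b : OrthonormalBasis (Fin (r + 1)) ℂ A) (c : Fin r → G) (T : (ℂ × E) →ₗ[ℂ] ℂ × G),
      lorentzForm (T (1, 0)) (T (1, 0)) = 1 ∧
      IsSpacelikeOrthonormal (T (1, 0))
        (Sum.elim (fun i => ((0 : ℂ), c i)) fun k => T (0, e k)) ∧
      ∀ z ∈ V, (∀ i, F z (b i.castSucc) = c i) ∧
        ∃ ℓ : ℂ, ℓ ≠ 0 ∧ T (1, z) = ℓ • (1, F z (b (Fin.last r))) := by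
  have := FiniteDimensional.complete ℂ A
  have := e.toBasis.finiteDimensional_of_finite
  obtain ⟨α, hα, hconst, T, hT, hTV⟩ :=
    hF.exists_unit_exists_lorentzForm_isometry hV hVc hdim hnull hne
  obtain ⟨b, rfl⟩ := exists_orthonormalBasis_apply_eq (by simpa using hr) (Fin.last r) hα
  obtain ⟨p, hp, -⟩ := id hnull
  have hperp (i : Fin r) : ⟪b i.castSucc, b (Fin.last r)⟫_ℂ = 0 :=
    b.inner_eq_zero i.castSucc_ne_last
  have hc (i : Fin r) (z) (hz : z ∈ V) : F z (b i.castSucc) = F p (b i.castSucc) :=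
    hconst _ (inner_eq_zero_symm.1 (hperp i)) z hz p hp
  have hcT (i x) : ⟪F p (b (Fin.castSucc i)), (T x).2⟫_ℂ = 0 :=
    hF.inner_snd_eq_zero hV hVc hnull (hperp i) (hc i) (fun z hz => (hTV z hz).2) x
  refine ⟨b, fun i => F p (b i.castSucc), T, by simp [hT, lorentzForm_apply], ?_,
    fun z hz => ⟨fun i => hc i z hz, _, hTV z hz⟩⟩
  refine .sumElim ⟨fun i j => ?_, fun i => ?_⟩ ⟨fun k l => ?_, fun k => ?_⟩ fun i k => ?_
  · simp only [lorentzForm_apply, hF.inner_apply_eq hV hVc hnull (hc i) _ hp,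
      b.inner_eq_ite, Fin.castSucc_inj]
    split_ifs <;> simp
  · rw [lorentzForm_apply, inner_eq_zero_symm.1 (hcT i _), mul_zero, sub_zero]
  · simp only [hT, lorentzForm_apply, e.inner_eq_ite]
    split_ifs <;> simp
  · simp [hT, lorentzForm_apply]
  · rw [lorentzForm_apply, hcT, map_zero, zero_mul, sub_zero]

end AdaptedFrames

section MatrixModel

open scoped InnerProductSpace

variable {m a b r s k : ℕ}

theorem rowSpan_mul_of_isUnit {n : ℕ} {B : Matrix (Fin m) (Fin m) ℂ} (hB : IsUnit B)
    (A : Matrix (Fin m) (Fin n) ℂ) : rowSpan (B * A) = rowSpan A := by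
  change Submodule.span ℂ (Set.range (B * A).row) = Submodule.span ℂ (Set.range A.row)
  rw [← range_vecMulLinear, ← range_vecMulLinear]
  have hcomp : (B * A).vecMulLinear = A.vecMulLinear ∘ₗ B.vecMulLinear :=
    LinearMap.ext fun v => (vecMul_vecMul v B A).symm
  rw [hcomp, LinearMap.range_comp_of_range_eq_top]
  exact LinearMap.range_eq_top.2 (vecMul_surjective_iff_isUnit.2 hB)

theorem sigMat_mul_self (a b : ℕ) : sigMat a b * sigMat a b = 1 := by
  rw [sigMat, diagonal_mul_diagonal, ← diagonal_one]
  congr 1 with i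
  split_ifs <;> simp

theorem isUnit_of_mul_sigMat_mul_conjTranspose
    {R : Matrix (Fin (a + b)) (Fin (a + b)) ℂ} (hR : R * sigMat a b * Rᴴ = sigMat a b) :
    IsUnit R :=
  IsUnit.of_mul_eq_one (sigMat a b * Rᴴ * sigMat a b)
    (by rw [← mul_assoc, ← mul_assoc, hR, sigMat_mul_self])

theorem inv_mul_sigMat_mul_conjTranspose_inv
    {R : Matrix (Fin (a + b)) (Fin (a + b)) ℂ} (hR : R * sigMat a b * Rᴴ = sigMat a b) :
    R⁻¹ * sigMat a b * R⁻¹ᴴ = sigMat a b := by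
  have hdet := (isUnit_iff_isUnit_det _).1 (isUnit_of_mul_sigMat_mul_conjTranspose hR)
  have hdet' : IsUnit Rᴴ.det := by rw [det_conjTranspose]; exact hdet.star
  nth_rw 1 [← hR]
  rw [conjTranspose_nonsing_inv, mul_assoc R, nonsing_inv_mul_cancel_left _ _ hdet,
    mul_nonsing_inv_cancel_right _ _ hdet']

/-- The Hermitian form of signature `(dim A, dim G)` on `A × G`, conjugate-linear in the first
argument; on `ℂᵃ × ℂᵇ` it is the form of matrix `sigMat a b`. -/
def signatureForm {A G : Type*} [NormedAddCommGroup A] [InnerProductSpace ℂ A]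
    [NormedAddCommGroup G] [InnerProductSpace ℂ G] (x y : A × G) : ℂ :=
  ⟪x.1, y.1⟫_ℂ - ⟪x.2, y.2⟫_ℂ

section SignatureForm

variable {A G : Type*} [NormedAddCommGroup A] [InnerProductSpace ℂ A] [NormedAddCommGroup G]
  [InnerProductSpace ℂ G]

theorem conj_signatureForm (x y : A × G) :
    (starRingEnd ℂ) (signatureForm x y) = signatureForm y x := by
  simp [signatureForm]

theorem signatureForm_smul_prodMk {α : A} (hα : ‖α‖ = 1) (x y : ℂ × G) :
    signatureForm (x.1 • α, x.2) (y.1 • α, y.2) = lorentzForm x y := by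
  simp [signatureForm, lorentzForm_apply, hα, inner_self_eq_norm_sq_to_K, mul_comm]

end SignatureForm

/-- The matrix whose rows are the given vectors of `ℂᵃ × ℂᵇ`. -/
def rowMatrix (u : Fin m → EuclideanSpace ℂ (Fin a) × EuclideanSpace ℂ (Fin b)) :
    Matrix (Fin m) (Fin (a + b)) ℂ :=
  of fun i => Fin.append (u i).1.ofLp (u i).2.ofLp

theorem rowMatrix_mul_sigMat_mul_conjTranspose_apply
    (u : Fin m → EuclideanSpace ℂ (Fin a) × EuclideanSpace ℂ (Fin b)) (i j : Fin m) :
    (rowMatrix u * sigMat a b * (rowMatrix u)ᴴ) i j = signatureForm (u j) (u i) := by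
  rw [mul_apply]
  simp [rowMatrix, signatureForm, sigMat, mul_diagonal, Fin.sum_univ_add, PiLp.inner_apply,
    sub_eq_add_neg]

theorem rowMatrix_append_mul_sigMat_mul_conjTranspose
    {P : Fin a → EuclideanSpace ℂ (Fin a) × EuclideanSpace ℂ (Fin b)}
    {Q : Fin b → EuclideanSpace ℂ (Fin a) × EuclideanSpace ℂ (Fin b)}
    (hP : ∀ i j, signatureForm (P i) (P j) = if i = j then 1 else 0)
    (hPQ : ∀ i j, signatureForm (P i) (Q j) = 0)
    (hQ : ∀ i j, signatureForm (Q i) (Q j) = if i = j then -1 else 0) :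
    rowMatrix (Fin.append P Q) * sigMat a b * (rowMatrix (Fin.append P Q))ᴴ = sigMat a b := by
  have hQP (i j) : signatureForm (Q j) (P i) = 0 := by rw [← conj_signatureForm, hPQ, map_zero]
  ext i j
  rw [rowMatrix_mul_sigMat_mul_conjTranspose_apply, sigMat, diagonal_apply]
  refine Fin.addCases (fun i => ?_) (fun i => ?_) i <;>
    refine Fin.addCases (fun j => ?_) (fun j => ?_) j
  · simp [hP, eq_comm]
  · simp [hQP, Fin.ext_iff, (i.2.trans_le (Nat.le_add_right a j)).ne]
  · simp [hPQ, Fin.ext_iff, (j.2.trans_le (Nat.le_add_right a i)).ne']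
  · simp [hQ, eq_comm]

theorem vecMul_chartMat (v : Fin a → ℂ) (Z : Matrix (Fin a) (Fin b) ℂ) :
    v ᵥ* chartMat a b Z = Fin.append v (v ᵥ* Z) := by
  ext j
  refine Fin.addCases (fun j => ?_) (fun j => ?_) j
  · simp [vecMul, dotProduct, chartMat, Fin.val_inj]
  · simp [vecMul, dotProduct, chartMat]

theorem vecMul_rowMatrix (v : Fin m → ℂ)
    (u : Fin m → EuclideanSpace ℂ (Fin a) × EuclideanSpace ℂ (Fin b)) :
    v ᵥ* rowMatrix u = Fin.append (∑ i, v i • u i).1.ofLp (∑ i, v i • u i).2.ofLp := by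
  ext j
  refine Fin.addCases (fun j => ?_) (fun j => ?_) j
  · simp [rowMatrix, vecMul, dotProduct, Prod.fst_sum]
  · simp [rowMatrix, vecMul, dotProduct, Prod.snd_sum]

theorem onecons_zero (z : Fin s → ℂ) : onecons z 0 = 1 := by
  simp [onecons]

theorem onecons_natAdd (z : Fin s → ℂ) (j : Fin s) : onecons z (Fin.natAdd 1 j) = z j := by
  simp [onecons]

theorem Phi_castSucc (v : Fin (1 + s) → ℂ) (i : Fin r) :
    Phi (r + 1) (r + s + k) s v i.castSucc =
      Fin.append (Pi.single i.castSucc 1) (Fin.append (Fin.append (Pi.single i 1) 0) 0) := by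
  have hi := i.isLt
  ext j
  refine Fin.addCases (fun j => ?_) (fun j => Fin.addCases (fun j => Fin.addCases (fun j => ?_)
    (fun j => ?_) j) (fun j => ?_) j) j
  all_goals
    simp only [Phi, of_apply, Fin.append_left, Fin.append_right, Pi.single_apply, Fin.ext_iff,
      Fin.val_castSucc, Fin.val_castAdd, Fin.val_natAdd, Pi.zero_apply]
    grind

theorem Phi_last (v : Fin (1 + s) → ℂ) :
    Phi (r + 1) (r + s + k) s v (Fin.last r) =
      Fin.append (Pi.single (Fin.last r) (v 0))
        (Fin.append (Fin.append 0 fun j => v (Fin.natAdd 1 j)) 0) := by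
  have hv {i j : Fin (1 + s)} (h : (i : ℕ) = j) : v i = v j := congrArg v (Fin.ext h)
  ext j
  refine Fin.addCases (fun j => ?_) (fun j => Fin.addCases (fun j => Fin.addCases (fun j => ?_)
    (fun j => ?_) j) (fun j => ?_) j) j
  all_goals
    simp only [Phi, of_apply, Fin.append_left, Fin.append_right, Pi.single_apply, Fin.ext_iff,
      Fin.val_last, Fin.val_castAdd, Fin.val_natAdd, Pi.zero_apply]
    grind

variable (O : OrthonormalBasis (Fin (r + 1)) ℂ (EuclideanSpace ℂ (Fin (r + 1))))
  (J : ℂ × EuclideanSpace ℂ (Fin b)) (N : Fin b → ℂ × EuclideanSpace ℂ (Fin b))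

/-- The frame of `ℂʳ⁺¹ ⊕ ℂᵇ` consisting of the first `r` vectors of `O` followed by `J, N₀, N₁, …`,
where `ℂ × ℂᵇ` is embedded by sending `(1, 0)` to the last vector of `O`. -/
def adaptedFrame :
    Fin (r + 1 + b) → EuclideanSpace ℂ (Fin (r + 1)) × EuclideanSpace ℂ (Fin b) :=
  Fin.append (Fin.snoc (fun i => (O i.castSucc, 0)) (J.1 • O (Fin.last r), J.2))
    fun j => ((N j).1 • O (Fin.last r), (N j).2)

theorem rowMatrix_adaptedFrame_mul_sigMat_mul_conjTranspose {J N} (hJ : lorentzForm J J = 1)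
    (hN : IsSpacelikeOrthonormal J N) :
    rowMatrix (adaptedFrame O J N) * sigMat (r + 1) b * (rowMatrix (adaptedFrame O J N))ᴴ =
      sigMat (r + 1) b := by
  have hform :=
    signatureForm_smul_prodMk (G := EuclideanSpace ℂ (Fin b)) (O.norm_eq_one (Fin.last r))
  have hO (i : Fin r) (x : ℂ × EuclideanSpace ℂ (Fin b)) :
      signatureForm (O i.castSucc, 0) (x.1 • O (Fin.last r), x.2) = 0 := by
    simp [signatureForm, O.inner_eq_zero i.castSucc_ne_last]
  refine rowMatrix_append_mul_sigMat_mul_conjTranspose (fun i j => ?_) (fun i j => ?_) fun i j => ?_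
  · refine Fin.lastCases ?_ (fun i => ?_) i <;> refine Fin.lastCases ?_ (fun j => ?_) j
    · simp [hform, hJ]
    · simp [← conj_signatureForm (O j.castSucc, _), hO, j.castSucc_ne_last.symm]
    · simp [hO, i.castSucc_ne_last]
    · simp [signatureForm, O.inner_eq_ite]
  · refine Fin.lastCases ?_ (fun i => ?_) i
    · simp [hform, hN.lorentzForm_left]
    · simp [hO]
  · rw [hform, hN.lorentzForm_eq_ite]

theorem Phi_mul_rowMatrix_adaptedFrame
    {J : ℂ × EuclideanSpace ℂ (Fin (r + s + k))}
    {N : Fin (r + s + k) → ℂ × EuclideanSpace ℂ (Fin (r + s + k))}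
    {Z : Matrix (Fin (r + 1)) (Fin (r + s + k)) ℂ} {z : Fin s → ℂ} {ℓ : ℂ}
    (hZ : ∀ i, N (Fin.castAdd k (Fin.castAdd s i)) = (0, WithLp.toLp 2 (O i.castSucc ᵥ* Z)))
    (hℓ : J + ∑ j, z j • N (Fin.castAdd k (Fin.natAdd r j)) =
      ℓ • (1, WithLp.toLp 2 (O (Fin.last r) ᵥ* Z))) :
    Phi (r + 1) (r + s + k) s (onecons z) * rowMatrix (adaptedFrame O J N) =
      of (fun i => (Fin.snoc 1 ℓ : Fin (r + 1) → ℂ) i • (O i).ofLp) *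
        chartMat (r + 1) (r + s + k) Z := by
  ext1 i
  have hrow : (of fun i => (Fin.snoc 1 ℓ : Fin (r + 1) → ℂ) i • (O i).ofLp) i =
    (Fin.snoc 1 ℓ : Fin (r + 1) → ℂ) i • (O i).ofLp := rfl
  rw [mul_apply_eq_vecMul, mul_apply_eq_vecMul, vecMul_rowMatrix, vecMul_chartMat, hrow,
    smul_vecMul]
  refine Fin.lastCases ?_ (fun i => ?_) i
  · let ψ := (LinearMap.toSpanSingleton ℂ _ (O (Fin.last r))).prodMap
      (.id : EuclideanSpace ℂ (Fin (r + s + k)) →ₗ[ℂ] _)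
    have hsum : ∑ j, Phi (r + 1) (r + s + k) s (onecons z) (Fin.last r) j • adaptedFrame O J N j =
        ψ (J + ∑ j, z j • N (Fin.castAdd k (Fin.natAdd r j))) := by
      have hN (j) : adaptedFrame O J N (Fin.natAdd (r + 1) j) = ψ (N j) := by simp [adaptedFrame, ψ]
      have hJ : adaptedFrame O J N (Fin.castAdd _ (Fin.last r)) = ψ J := by simp [adaptedFrame, ψ]
      simp [hN, hJ, Phi_last, onecons_zero, onecons_natAdd, Fin.sum_univ_add, Pi.single_apply,
        -LinearMap.prodMap_apply]
    rw [hsum, hℓ]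
    simp [ψ]
  · have hO : adaptedFrame O J N (Fin.castAdd _ i.castSucc) = (O i.castSucc, 0) := by
      simp [adaptedFrame]
    have hN : adaptedFrame O J N (Fin.natAdd (r + 1) (Fin.castAdd k (Fin.castAdd s i))) =
        (0, WithLp.toLp 2 (O i.castSucc ᵥ* Z)) := by
      simp [adaptedFrame, hZ]
    have hsum : ∑ j, Phi (r + 1) (r + s + k) s (onecons z) i.castSucc j • adaptedFrame O J N j =
        (O i.castSucc, WithLp.toLp 2 (O i.castSucc ᵥ* Z)) := by
      simp [Phi_castSucc, Fin.sum_univ_add, Pi.single_apply, hO, hN]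
    simp [hsum]

theorem isUnit_of_smul_orthonormalBasis {d : Fin (r + 1) → ℂ} (hd : ∀ i, d i ≠ 0) :
    IsUnit (of fun i => d i • (O i).ofLp) := by
  rw [← linearIndependent_rows_iff_isUnit]
  exact (O.orthonormal.linearIndependent.map' (WithLp.linearEquiv 2 ℂ _).toLinearMap
    (LinearEquiv.ker _)).units_smul fun i => .mk0 (d i) (hd i)

end MatrixModel

section Coordinates

open scoped InnerProductSpace

variable {a b r s k : ℕ}

theorem rowSpan_chartMat_mul_inv_rowMatrix_adaptedFrame
    {O : OrthonormalBasis (Fin (r + 1)) ℂ (EuclideanSpace ℂ (Fin (r + 1)))}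
    {J : ℂ × EuclideanSpace ℂ (Fin (r + s + k))}
    {N : Fin (r + s + k) → ℂ × EuclideanSpace ℂ (Fin (r + s + k))}
    (hR : IsUnit (rowMatrix (adaptedFrame O J N)))
    {Z : Matrix (Fin (r + 1)) (Fin (r + s + k)) ℂ} {z : Fin s → ℂ} {ℓ : ℂ} (hℓ0 : ℓ ≠ 0)
    (hZ : ∀ i, N (Fin.castAdd k (Fin.castAdd s i)) = (0, WithLp.toLp 2 (O i.castSucc ᵥ* Z)))
    (hℓ : J + ∑ j, z j • N (Fin.castAdd k (Fin.natAdd r j)) =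
      ℓ • (1, WithLp.toLp 2 (O (Fin.last r) ᵥ* Z))) :
    rowSpan (chartMat (r + 1) (r + s + k) Z * (rowMatrix (adaptedFrame O J N))⁻¹) =
      rowSpan (Phi (r + 1) (r + s + k) s (onecons z)) := by
  have hd : ∀ i, (Fin.snoc 1 ℓ : Fin (r + 1) → ℂ) i ≠ 0 :=
    Fin.lastCases (by simpa using hℓ0) (by simp)
  rw [← rowSpan_mul_of_isUnit (isUnit_of_smul_orthonormalBasis O hd), ← Matrix.mul_assoc,
    ← Phi_mul_rowMatrix_adaptedFrame O hZ hℓ,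
    mul_nonsing_inv_cancel_right _ _ ((isUnit_iff_isUnit_det _).1 hR)]

theorem IsSpacelikeOrthonormal.exists_append {E : Type*} [NormedAddCommGroup E]
    [InnerProductSpace ℂ E] [FiniteDimensional ℂ E] {J : ℂ × E} (hJ : lorentzForm J J = 1)
    {n : Fin r → ℂ × E} {m : Fin s → ℂ × E} (hnm : IsSpacelikeOrthonormal J (Sum.elim n m))
    (hk : r + s + k = Module.finrank ℂ E) :
    ∃ N : Fin (r + s + k) → ℂ × E, IsSpacelikeOrthonormal J N ∧
      (∀ i, N (Fin.castAdd k (Fin.castAdd s i)) = n i) ∧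
      ∀ j, N (Fin.castAdd k (Fin.natAdd r j)) = m j := by
  obtain ⟨l, hl⟩ := IsSpacelikeOrthonormal.exists_sumElim (κ := Fin k) hJ hnm (by simpa using hk)
  have hinj := (finSumFinEquiv.symm.trans
    (finSumFinEquiv.symm.sumCongr (.refl (Fin k)))).injective (α := Fin (r + s + k))
  exact ⟨_, hl.comp_of_injective hinj, by simp, by simp⟩

/-- The operator `β ↦ β ᵥ* Z` from `ℂᵃ` to `ℂᵇ` of the matrix with entries `Z`. -/
def vecMulOperator : (Fin a → Fin b → ℂ) ≃ₗ[ℂ]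
    EuclideanSpace ℂ (Fin a) →L[ℂ] EuclideanSpace ℂ (Fin b) :=
  ofLinearEquiv ℂ ≪≫ₗ transposeLinearEquiv _ _ ℂ ℂ ≪≫ₗ toLpLin 2 2 ≪≫ₗ
    LinearMap.toContinuousLinearMap

theorem vecMulOperator_apply (Z : Fin a → Fin b → ℂ) (β : EuclideanSpace ℂ (Fin a)) :
    vecMulOperator Z β = WithLp.toLp 2 (β.ofLp ᵥ* of Z) := by
  simp [vecMulOperator, toLpLin_apply, mulVec_transpose]

theorem inner_eq_cdot_s1 (z w : EuclideanSpace ℂ (Fin s)) : ⟪w, z⟫_ℂ = cdot z.ofLp w.ofLp := by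
  simp [PiLp.inner_apply, cdot]

theorem isLocalOrthogonal_vecMulOperator_comp {F : (Fin s → ℂ) → Fin a → Fin b → ℂ}
    {U : Set (Fin s → ℂ)} (hF : DifferentiableOn ℂ F U)
    (horth : ∀ z ∈ U, ∀ w ∈ U, cdot z w = 1 → of (F z) * (of (F w))ᴴ = 1) :
    IsLocalOrthogonal (fun z : EuclideanSpace ℂ (Fin s) => vecMulOperator (F z.ofLp))
      (WithLp.ofLp ⁻¹' U) where
  differentiableOn :=
    (vecMulOperator (a := a) (b := b)).toContinuousLinearEquiv.differentiable.comp_differentiableOn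
      (hF.comp (EuclideanSpace.equiv (Fin s) ℂ).differentiable.differentiableOn fun _ => id)
  inner_eq z hz w hw hzw β γ := by
    have h := horth _ hz _ hw ((inner_eq_cdot_s1 z w).symm.trans hzw)
    rw [vecMulOperator_apply, vecMulOperator_apply, EuclideanSpace.inner_toLp_toLp, star_vecMul,
      dotProduct_mulVec, vecMul_vecMul, h, vecMul_one, EuclideanSpace.inner_eq_star_dotProduct]

theorem map_one_prodMk_eq_add_sum {E : Type*} [AddCommGroup E] [Module ℂ E]
    (T : (ℂ × EuclideanSpace ℂ (Fin s)) →ₗ[ℂ] E) (z : EuclideanSpace ℂ (Fin s)) :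
    T (1, z) = T (1, 0) + ∑ j, z.ofLp j • T (0, EuclideanSpace.basisFun (Fin s) ℂ j) := by
  have hz : ((1 : ℂ), z) =
      (1, 0) + ∑ j, z.ofLp j • ((0 : ℂ), EuclideanSpace.basisFun (Fin s) ℂ j) := by
    ext1
    · simp [Prod.fst_sum]
    · simpa [Prod.snd_sum] using ((EuclideanSpace.basisFun (Fin s) ℂ).sum_repr z).symm
  rw [hz, map_add, map_sum]
  simp only [map_smul]

theorem exists_unitary_rowSpan_chartMat_mul_eq_rowSpan_Phi
    {O : OrthonormalBasis (Fin (r + 1)) ℂ (EuclideanSpace ℂ (Fin (r + 1)))}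
    {c : Fin r → EuclideanSpace ℂ (Fin b)}
    {T : (ℂ × EuclideanSpace ℂ (Fin s)) →ₗ[ℂ] ℂ × EuclideanSpace ℂ (Fin b)}
    (hJ : lorentzForm (T (1, 0)) (T (1, 0)) = 1)
    (hn : IsSpacelikeOrthonormal (T (1, 0)) (Sum.elim (fun i => ((0 : ℂ), c i))
      fun j => T (0, EuclideanSpace.basisFun (Fin s) ℂ j))) :
    ∃ M : Matrix (Fin (r + 1 + b)) (Fin (r + 1 + b)) ℂ,
      IsUnit M ∧ M * sigMat (r + 1) b * Mᴴ = sigMat (r + 1) b ∧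
      ∀ (Z : Fin (r + 1) → Fin b → ℂ) (z : EuclideanSpace ℂ (Fin s)) (ℓ : ℂ), ℓ ≠ 0 →
        (∀ i, vecMulOperator Z (O i.castSucc) = c i) →
        T (1, z) = ℓ • (1, vecMulOperator Z (O (Fin.last r))) →
        rowSpan (chartMat (r + 1) b (of Z) * M) = rowSpan (Phi (r + 1) b s (onecons z.ofLp)) := by
  obtain ⟨k, rfl⟩ : ∃ k, b = r + s + k :=
    Nat.exists_eq_add_of_le (by simpa using hn.card_le_finrank hJ)
  obtain ⟨N, hN, hNc, hNT⟩ := hn.exists_append (k := k) hJ (by simp)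
  have hR := rowMatrix_adaptedFrame_mul_sigMat_mul_conjTranspose O hJ hN
  have hunit := isUnit_of_mul_sigMat_mul_conjTranspose hR
  refine ⟨_, isUnit_nonsing_inv_iff.2 hunit, inv_mul_sigMat_mul_conjTranspose_inv hR,
    fun Z z ℓ hℓ0 hc hℓ => ?_⟩
  refine rowSpan_chartMat_mul_inv_rowMatrix_adaptedFrame hunit hℓ0 (fun i => ?_) ?_
  · rw [hNc, ← hc, vecMulOperator_apply]
  · simp only [hNT]
    rw [← map_one_prodMk_eq_add_sum, hℓ, vecMulOperator_apply]

theorem rigidity_linear_embedding_general {r' s' : ℕ} (hdim : s' + 2 < 2 * s + r')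
    {U : Set (Fin s → ℂ)} (hopen : IsOpen U) (hconn : IsPreconnected U)
    (hnull : ∃ z ∈ U, cdot z z = 1) {F : (Fin s → ℂ) → Fin r' → Fin s' → ℂ}
    (hF : DifferentiableOn ℂ F U)
    (horth : ∀ z ∈ U, ∀ w ∈ U, cdot z w = 1 → of (F z) * (of (F w))ᴴ = 1)
    (hnonconst : ∃ z ∈ U, ∃ w ∈ U, F z ≠ F w) :
    ∃ M' : Matrix (Fin (r' + s')) (Fin (r' + s')) ℂ,
      IsUnit M' ∧ M' * sigMat r' s' * M'ᴴ = sigMat r' s' ∧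
      ∀ z ∈ U, rowSpan (chartMat r' s' (of (F z)) * M') = rowSpan (Phi r' s' s (onecons z)) := by
  obtain ⟨p, hp, hpp⟩ := hnull
  obtain ⟨z, hz, w, hw, hzw⟩ := hnonconst
  obtain _ | r := r'
  · exact absurd (Subsingleton.elim _ _) hzw
  have hV : IsOpen (WithLp.ofLp (p := 2) ⁻¹' U) := hopen.preimage (PiLp.continuous_ofLp 2 _)
  have hVc : IsPreconnected (WithLp.ofLp (p := 2) ⁻¹' U) :=
    (PiLp.homeomorph 2 fun _ : Fin s => ℂ).isPreconnected_preimage.2 hconn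
  have hnorm : ‖WithLp.toLp 2 p‖ = 1 := by
    rw [← pow_eq_one_iff_of_nonneg (norm_nonneg _) two_ne_zero, norm_sq_eq_re_inner (𝕜 := ℂ),
      inner_eq_cdot_s1, hpp, RCLike.one_re]
  obtain ⟨O, c, T, hJ, hn, hT⟩ :=
    (isLocalOrthogonal_vecMulOperator_comp hF horth).exists_isSpacelikeOrthonormal
      (EuclideanSpace.basisFun (Fin s) ℂ) (r := r) (by simp) hV hVc (by simpa using hdim)
      ⟨.toLp 2 p, hp, hnorm⟩ ⟨.toLp 2 z, hz, .toLp 2 w, hw, vecMulOperator.injective.ne hzw⟩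
  obtain ⟨M', hunit, hsig, hM'⟩ := exists_unitary_rowSpan_chartMat_mul_eq_rowSpan_Phi hJ hn
  refine ⟨M', hunit, hsig, fun x hx => ?_⟩
  obtain ⟨hc, ℓ, hℓ0, hℓ⟩ := hT (.toLp 2 x) hx
  exact hM' (F x) (.toLp 2 x) ℓ hℓ0 hc hℓ

end Coordinates

/-- Let `s ≥ 2`, `2 ≤ r' ≤ s'` with `s − 1 ≤ s' − r' < 2s − 2`, and let
`F` be a nonconstant local orthogonal map in chart form from `𝒢(1,s)` to `𝒢(r',s')`.
Then there exist a `(1,s)`-unitary `M ∈ GL(1+s,ℂ)` and an `(r',s')`-unitary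
`M' ∈ GL(r'+s',ℂ)` with
`rowSpan([I_{r'} | F(z)]·M') = rowSpan(Φ((1,z)·M))` for all `z ∈ U`; i.e. after
composing with automorphisms on both sides, `F` is the standard linear embedding. -/
theorem rigidity_linear_embedding
    (s r' s' : ℕ) (hs : 2 ≤ s) (hr' : 2 ≤ r') (hr's' : r' ≤ s')
    (hlow : (s : ℤ) - 1 ≤ (s' : ℤ) - (r' : ℤ))
    (hhigh : (s' : ℤ) - (r' : ℤ) < 2 * (s : ℤ) - 2)
    (U : Set (Fin s → ℂ)) (hopen : IsOpen U) (hconn : IsPreconnected U)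
    (hnull : ∃ z ∈ U, cdot z z = 1)
    (F : (Fin s → ℂ) → Fin r' → Fin s' → ℂ)
    (hF : DifferentiableOn ℂ F U)
    (horth : ∀ z ∈ U, ∀ w ∈ U, cdot z w = 1 →
      Matrix.of (F z) * (Matrix.of (F w))ᴴ = (1 : Matrix (Fin r') (Fin r') ℂ))
    (hnonconst : ∃ z ∈ U, ∃ w ∈ U, F z ≠ F w) :
    ∃ M : Matrix (Fin (1 + s)) (Fin (1 + s)) ℂ,
      ∃ M' : Matrix (Fin (r' + s')) (Fin (r' + s')) ℂ,
        IsUnit M ∧ IsUnit M' ∧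
        M * sigMat 1 s * Mᴴ = sigMat 1 s ∧
        M' * sigMat r' s' * M'ᴴ = sigMat r' s' ∧
        ∀ z ∈ U,
          rowSpan (chartMat r' s' (Matrix.of (F z)) * M') =
            rowSpan (Phi r' s' s (Matrix.vecMul (onecons z) M)) := by
  obtain ⟨M', hunit, hsig, hM'⟩ :=
    rigidity_linear_embedding_general (by omega) hopen hconn hnull hF horth hnonconst
  exact ⟨1, M', isUnit_one, hunit, by simp, hsig, by simpa using hM'⟩
end
end
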